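/- arXiv:2202.05438 — 4 statements merged into one kernel-verified Lean document; each statement's English description precedes it below -/
import Mathlib

section
/- Let t : ℤ → ℝ be nonnegative and let n ≥ 1 be such that t(-n) > 0 and t(-j) = 0 for all j > n. Assume Σ_{i=0}^∞ t(i-n) = 1, and assume that the derivative of the function z ↦ (τ(z))^{1/n} is increasing on [0,1], where τ(z) = Σ_{i=0}^∞ t(i-n)·z^i. Then every positive solution of the fixed point equation x = Tx is bounded if and only if Σ_{i=0}^∞ i·t(i-n) < n. -/
/-- `x` is a positive solution of the fixed point equation `x = Tx` for the
infinite Toeplitz matrix with symbol `t : ℤ → ℝ`, acting by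
`(Tx)_j = Σ_{i=0}^∞ t(j-i)·x_i`. -/
def IsPosToeplitzSolution (t : ℤ → ℝ) (x : ℕ → ℝ) : Prop :=
  (∀ i, 0 ≤ x i) ∧ (∃ i, 0 < x i) ∧
    ∀ j : ℕ, HasSum (fun i : ℕ => t ((j : ℤ) - (i : ℤ)) * x i) (x j)

/-!
Write `φ = τ` as a power series, so that `x = Tx` says that `φ x` and `zⁿ x` agree from degree `n`
on. Hence `w = (φ - zⁿ) / (1 - z)` satisfies: the coefficients of `w x` are nonnegative and, from
degree `n - 1` on, equal to the sum `P` of the first `n` coefficients of `φ x`. The coefficients of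
`w` are nonnegative below degree `n` and nonpositive afterwards, and truncating the first moment of
`φ` at `M ≥ n` gives `∑ min l M * φ_l = n - ∑_{j < M} w_j`. So `∑ i * φ_i < n` says exactly that the
partial sums of `w` are eventually bounded below by a positive constant.

If they are, the discrete maximum principle bounds `x`. Conversely, if `x ≤ C` and `P > 0`,
comparing `w(z) x(z)` with `P / (1 - z)` and `x(z)` with `C / (1 - z)` as `z → 1⁻` gives
`P ≤ C * ∑_{j < M} w_j`. For this direction a positive solution must exist: solve the first `N`
equations with boundary values `1` on the next `n` indices and `0` beyond them, normalize, and let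
`N → ∞` by compactness.
-/

open Filter Topology Function
open Finset hiding mk
open scoped PowerSeries
open PowerSeries (X coeff coeff_mk coeff_mul mk)

section GeneratingFunctions

theorem coeff_mul_mk_one {R : Type*} [Semiring R] (φ : R⟦X⟧) (m : ℕ) :
    coeff m (φ * mk 1) = ∑ k ∈ range (m + 1), coeff k φ := by
  simp [coeff_mul, Nat.sum_antidiagonal_eq_sum_range_succ_mk]

theorem coeff_succ_mul_mk_pow {R : Type*} [CommSemiring R] (φ : R⟦X⟧) (r : R) (m : ℕ) :
    coeff (m + 1) (φ * mk (r ^ ·)) = r * coeff m (φ * mk (r ^ ·)) + coeff (m + 1) φ := by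
  simp only [coeff_mul, coeff_mk, Nat.sum_antidiagonal_succ', mul_sum]
  rw [pow_zero, mul_one, add_comm]
  congr 1
  exact sum_congr rfl fun p _ => by ring

theorem coeff_add_sub_one_mul {R : Type*} [Semiring R] (φ ψ : R⟦X⟧) {n : ℕ} (hn : 0 < n) (N : ℕ) :
    coeff (N + n - 1) (φ * ψ) = ∑ j ∈ range n, coeff j φ * coeff (N + (n - 1 - j)) ψ +
      ∑ j ∈ range N, coeff (n + j) φ * coeff (N - 1 - j) ψ := by
  rw [coeff_mul, Nat.sum_antidiagonal_eq_sum_range_succ_mk,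
    show (N + n - 1).succ = n + N by omega, sum_range_add]
  refine congrArg₂ _ (sum_congr rfl fun j hj => ?_) (sum_congr rfl fun j _ => ?_)
  · rw [mem_range] at hj
    rw [show N + n - 1 - j = N + (n - 1 - j) by omega]
  · rw [show N + n - 1 - (n + j) = N - 1 - j by omega]

section OrderedSemiring

variable {R : Type*} [CommSemiring R] [PartialOrder R] [IsOrderedRing R] {φ ψ : R⟦X⟧} {r : R}

theorem coeff_mul_nonneg (hφ : ∀ i, 0 ≤ coeff i φ) (hψ : ∀ i, 0 ≤ coeff i ψ) (m : ℕ) :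
    0 ≤ coeff m (φ * ψ) := by
  rw [coeff_mul]
  exact sum_nonneg fun p _ => mul_nonneg (hφ _) (hψ _)

theorem coeff_mul_mk_pow_nonneg (hr : 0 ≤ r) (hφ : ∀ m, 0 ≤ coeff m φ) (m : ℕ) :
    0 ≤ coeff m (φ * mk (r ^ ·)) :=
  coeff_mul_nonneg hφ (fun i => by simpa only [coeff_mk] using pow_nonneg hr i) m

theorem coeff_le_coeff_mul_mk_pow (hr : 0 ≤ r) (hφ : ∀ m, 0 ≤ coeff m φ) (m : ℕ) :
    coeff m φ ≤ coeff m (φ * mk (r ^ ·)) := by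
  cases m with
  | zero => simp
  | succ m =>
    rw [coeff_succ_mul_mk_pow]
    exact le_add_of_nonneg_left (mul_nonneg hr (coeff_mul_mk_pow_nonneg hr hφ m))

theorem pow_mul_coeff_mul_mk_pow_le (hr : 0 ≤ r) (hφ : ∀ m, 0 ≤ coeff m φ) (m k : ℕ) :
    r ^ k * coeff m (φ * mk (r ^ ·)) ≤ coeff (m + k) (φ * mk (r ^ ·)) := by
  induction k with
  | zero => simp
  | succ k ih =>
    rw [pow_succ', mul_assoc, ← add_assoc, coeff_succ_mul_mk_pow]
    exact le_add_of_le_of_nonneg (mul_le_mul_of_nonneg_left ih hr) (hφ _)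

end OrderedSemiring

theorem coeff_mul_mk_pow_le {R : Type*} [Field R] [LinearOrder R] [IsStrictOrderedRing R]
    {φ : R⟦X⟧} {r Q : R} (hr : 0 ≤ r) (hr1 : r < 1) (hQ : 0 ≤ Q)
    (hφ : ∀ m, coeff m φ ≤ Q) (m : ℕ) : coeff m (φ * mk (r ^ ·)) ≤ Q / (1 - r) := by
  have hpos : 0 < 1 - r := sub_pos.2 hr1
  induction m with
  | zero =>
    calc coeff 0 (φ * mk (r ^ ·)) = coeff 0 φ := by simp
      _ ≤ Q := hφ 0
      _ ≤ Q / (1 - r) := le_div_self hQ hpos (by linarith)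
  | succ m ih =>
    calc coeff (m + 1) (φ * mk (r ^ ·))
        = r * coeff m (φ * mk (r ^ ·)) + coeff (m + 1) φ := coeff_succ_mul_mk_pow φ r m
      _ ≤ r * (Q / (1 - r)) + Q := add_le_add (mul_le_mul_of_nonneg_left ih hr) (hφ _)
      _ = Q / (1 - r) := by field_simp; ring

variable {φ ψ : ℝ⟦X⟧} {r : ℝ}

theorem summable_norm_coeff_mul_pow {B : ℝ} (hr : 0 ≤ r) (hr1 : r < 1)
    (hφ : ∀ m, |coeff m φ| ≤ B) : Summable fun m => ‖coeff m φ * r ^ m‖ := by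
  refine .of_nonneg_of_le (fun _ => norm_nonneg _) (fun m => ?_)
    ((summable_geometric_of_lt_one hr hr1).mul_left B)
  rw [norm_mul, norm_pow, Real.norm_eq_abs, Real.norm_eq_abs, abs_of_nonneg hr]
  exact mul_le_mul_of_nonneg_right (hφ m) (pow_nonneg hr m)

theorem hasSum_coeff_mul_mul_pow (hφ : Summable fun m => ‖coeff m φ * r ^ m‖)
    (hψ : Summable fun m => ‖coeff m ψ * r ^ m‖) :
    HasSum (fun m => coeff m (φ * ψ) * r ^ m)
      ((∑' m, coeff m φ * r ^ m) * ∑' m, coeff m ψ * r ^ m) := by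
  have hterm (m : ℕ) : coeff m (φ * ψ) * r ^ m =
      ∑ p ∈ antidiagonal m, coeff p.1 φ * r ^ p.1 * (coeff p.2 ψ * r ^ p.2) := by
    rw [coeff_mul, sum_mul]
    refine sum_congr rfl fun p hp => ?_
    rw [← mem_antidiagonal.1 hp, pow_add]
    ring
  simp only [hterm]
  rw [tsum_mul_tsum_eq_tsum_sum_antidiagonal_of_summable_norm hφ hψ]
  exact (summable_norm_sum_mul_antidiagonal_of_summable_norm hφ hψ).of_norm.hasSum

theorem mul_pow_div_le_of_hasSum {P s : ℝ} {k : ℕ} (hr : 0 ≤ r) (hr1 : r < 1)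
    (hφ : ∀ m, 0 ≤ coeff m φ) (hP : ∀ m ≥ k, P ≤ coeff m φ)
    (hs : HasSum (fun m => coeff m φ * r ^ m) s) : P * r ^ k / (1 - r) ≤ s := by
  have hgeom := (hasSum_geometric_of_lt_one hr hr1).mul_left (P * r ^ k)
  have htail : P * r ^ k / (1 - r) ≤ s - ∑ m ∈ range k, coeff m φ * r ^ m := by
    refine hasSum_le (fun m => ?_) hgeom ((hasSum_nat_add_iff' k).2 hs)
    rw [mul_assoc, ← pow_add, add_comm k m]
    exact mul_le_mul_of_nonneg_right (hP _ (Nat.le_add_left k m)) (pow_nonneg hr _)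
  have hhead : 0 ≤ ∑ m ∈ range k, coeff m φ * r ^ m :=
    sum_nonneg fun m _ => mul_nonneg (hφ m) (pow_nonneg hr m)
  linarith

end GeneratingFunctions

section Tauberian

variable {w x : ℝ⟦X⟧} {n : ℕ}

theorem mul_pow_le_mul_sum_of_le_coeff_mul {B C P z : ℝ} {k M : ℕ}
    (hwB : ∀ j, |coeff j w| ≤ B) (hwM : ∀ j ≥ M, coeff j w ≤ 0)
    (hx : ∀ i, 0 ≤ coeff i x) (hxC : ∀ i, coeff i x ≤ C) (hP : 0 < P)
    (hwx : ∀ m, 0 ≤ coeff m (w * x)) (hPk : ∀ m ≥ k, P ≤ coeff m (w * x))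
    (hz : 0 < z) (hz1 : z < 1) :
    P * z ^ k ≤ C * ∑ j ∈ range M, coeff j w * z ^ j := by
  have hxabs (i : ℕ) : |coeff i x| ≤ C := by rw [abs_of_nonneg (hx i)]; exact hxC i
  have hsw := summable_norm_coeff_mul_pow hz.le hz1 hwB
  have hsx := summable_norm_coeff_mul_pow hz.le hz1 hxabs
  set W := ∑' j, coeff j w * z ^ j with hW
  set Y := ∑' i, coeff i x * z ^ i
  have hlower : P * z ^ k / (1 - z) ≤ W * Y :=
    mul_pow_div_le_of_hasSum hz.le hz1 hwx hPk (hasSum_coeff_mul_mul_pow hsw hsx)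
  have hY0 : 0 ≤ Y := tsum_nonneg fun i => mul_nonneg (hx i) (by positivity)
  have hYC : Y ≤ C / (1 - z) :=
    hasSum_le (fun i => mul_le_mul_of_nonneg_right (hxC i) (by positivity))
      hsx.of_norm.hasSum ((hasSum_geometric_of_lt_one hz.le hz1).mul_left C)
  have hz1' : 0 < 1 - z := sub_pos.2 hz1
  have hW0 : 0 < W := pos_of_mul_pos_left (lt_of_lt_of_le (by positivity) hlower) hY0
  have hWM : W ≤ ∑ j ∈ range M, coeff j w * z ^ j := by
    rw [hW, ← hsw.of_norm.sum_add_tsum_nat_add M]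
    exact add_le_of_nonpos_right (tsum_nonpos fun j =>
      mul_nonpos_of_nonpos_of_nonneg (hwM _ (Nat.le_add_left M j)) (by positivity))
  calc P * z ^ k ≤ W * Y * (1 - z) := (div_le_iff₀ hz1').1 hlower
    _ ≤ W * (C / (1 - z)) * (1 - z) := by gcongr
    _ = C * W := by field_simp
    _ ≤ C * ∑ j ∈ range M, coeff j w * z ^ j :=
      mul_le_mul_of_nonneg_left hWM ((hx 0).trans (hxC 0))

theorem le_mul_sum_of_le_coeff_mul {B C P : ℝ} {k M : ℕ}
    (hwB : ∀ j, |coeff j w| ≤ B) (hwM : ∀ j ≥ M, coeff j w ≤ 0)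
    (hx : ∀ i, 0 ≤ coeff i x) (hxC : ∀ i, coeff i x ≤ C) (hP : 0 < P)
    (hwx : ∀ m, 0 ≤ coeff m (w * x)) (hPk : ∀ m ≥ k, P ≤ coeff m (w * x)) :
    P ≤ C * ∑ j ∈ range M, coeff j w := by
  have hlim {f : ℝ → ℝ} (hf : Continuous f) : Tendsto f (𝓝[<] 1) (𝓝 (f 1)) :=
    hf.continuousAt.tendsto.mono_left nhdsWithin_le_nhds
  have hleft := hlim (f := fun z => P * z ^ k) (by fun_prop)
  have hright := hlim (f := fun z => C * ∑ j ∈ range M, coeff j w * z ^ j) (by fun_prop)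
  simp only [one_pow, mul_one] at hleft hright
  refine le_of_tendsto_of_tendsto hleft hright ?_
  filter_upwards [Ioo_mem_nhdsLT (zero_lt_one' ℝ)] with z hz
  exact mul_pow_le_mul_sum_of_le_coeff_mul hwB hwM hx hxC hP hwx hPk hz.1 hz.2

-- Discrete maximum principle: in degree `N + n - 1` of `w * u` the `n` nonnegative weights multiply
-- coefficients that are at least `θ * coeff N u`, while the other weights are nonpositive and
-- multiply coefficients of index less than `N`, which are at most `Q / δ` by induction.
theorem coeff_le_div_of_coeff_mul_le {u : ℝ⟦X⟧} {Q δ θ : ℝ} (hn : 0 < n)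
    (hpos : ∀ j < n, 0 ≤ coeff j w) (hneg : ∀ j ≥ n, coeff j w ≤ 0)
    (hQ : 0 ≤ Q) (hwu : ∀ m, coeff m (w * u) ≤ Q)
    (hu : ∀ N, ∀ k < n, θ * coeff N u ≤ coeff (N + k) u) (hδ : 0 < δ)
    (hsum : ∀ M, δ ≤ θ * ∑ j ∈ range n, coeff j w + ∑ j ∈ range M, coeff (n + j) w) (N : ℕ) :
    coeff N u ≤ Q / δ := by
  set K := Q / δ
  set α := ∑ j ∈ range n, coeff j w
  set β := ∑ j ∈ range N, coeff (n + j) w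
  have hK : 0 ≤ K := by positivity
  have hKδ : K * δ = Q := div_mul_cancel₀ Q hδ.ne'
  induction N using Nat.strong_induction_on with
  | _ N ih =>
    have hhead : θ * coeff N u * ∑ j ∈ range n, coeff j w ≤
        ∑ j ∈ range n, coeff j w * coeff (N + (n - 1 - j)) u := by
      rw [mul_sum]
      refine sum_le_sum fun j hj => ?_
      rw [mul_comm]
      exact mul_le_mul_of_nonneg_left (hu N _ (by omega)) (hpos j (mem_range.1 hj))
    have htail : K * ∑ i ∈ range N, coeff (n + i) w ≤
        ∑ i ∈ range N, coeff (n + i) w * coeff (N - 1 - i) u := by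
      rw [mul_sum]
      refine sum_le_sum fun i hi => ?_
      rw [mem_range] at hi
      rw [mul_comm]
      exact mul_le_mul_of_nonpos_left (ih _ (by omega)) (hneg _ (Nat.le_add_right n i))
    have hα : 0 < θ * α := by simpa using hδ.trans_le (hsum 0)
    refine le_of_mul_le_mul_left ?_ hα
    have hKsum := mul_le_mul_of_nonneg_left (hsum N) hK
    have hrow := hwu (N + n - 1)
    rw [coeff_add_sub_one_mul w u hn] at hrow
    linarith

theorem exists_lt_one_lt_pow_mul (n : ℕ) {a b : ℝ} (hab : a < b) :
    ∃ r : ℝ, 0 < r ∧ r < 1 ∧ a < r ^ n * b := by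
  have hcont : ContinuousAt (fun r : ℝ => r ^ n * b) 1 := by fun_prop
  have hev : ∀ᶠ r in 𝓝[<] (1 : ℝ), a < r ^ n * b :=
    (hcont.tendsto.mono_left nhdsWithin_le_nhds).eventually_const_lt (by simpa using hab)
  obtain ⟨r, hlt, hr⟩ := (hev.and (Ioo_mem_nhdsLT (zero_lt_one' ℝ))).exists
  exact ⟨r, hr.1, hr.2, hlt⟩

-- Multiplication by `1 / (1 - r z)` provides the lower bound that the maximum principle needs on
-- the coefficients following `N`, which `x` itself need not satisfy.
theorem exists_coeff_le_of_coeff_mul_le {Q δ : ℝ} (hn : 0 < n)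
    (hpos : ∀ j < n, 0 ≤ coeff j w) (hneg : ∀ j ≥ n, coeff j w ≤ 0)
    (hx : ∀ i, 0 ≤ coeff i x) (hQ : 0 ≤ Q) (hwx : ∀ m, coeff m (w * x) ≤ Q) (hδ : 0 < δ)
    (hsum : ∀ M, δ ≤ ∑ j ∈ range (n + M), coeff j w) : ∃ C, ∀ i, coeff i x ≤ C := by
  obtain ⟨r, hr, hr1, hlt⟩ := exists_lt_one_lt_pow_mul n
    (sub_lt_self (∑ j ∈ range n, coeff j w) (half_pos hδ))
  have hsmooth : ∀ N, ∀ k < n,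
      r ^ n * coeff N (x * mk (r ^ ·)) ≤ coeff (N + k) (x * mk (r ^ ·)) := fun N k hk =>
    (mul_le_mul_of_nonneg_right (pow_le_pow_of_le_one hr.le hr1.le hk.le)
      (coeff_mul_mk_pow_nonneg hr.le hx N)).trans (pow_mul_coeff_mul_mk_pow_le hr.le hx N k)
  have hconv (m : ℕ) : coeff m (w * (x * mk (r ^ ·))) ≤ Q / (1 - r) := by
    rw [← mul_assoc]
    exact coeff_mul_mk_pow_le hr.le hr1 hQ hwx m
  have hsum' (M : ℕ) : δ / 2 ≤
      r ^ n * ∑ j ∈ range n, coeff j w + ∑ j ∈ range M, coeff (n + j) w := by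
    have := hsum M
    rw [sum_range_add] at this
    linarith
  exact ⟨_, fun i => (coeff_le_coeff_mul_mk_pow hr.le hx i).trans <|
    coeff_le_div_of_coeff_mul_le hn hpos hneg (div_nonneg hQ (sub_pos.2 hr1).le) hconv hsmooth
      (half_pos hδ) hsum' i⟩

end Tauberian

section Toeplitz

/-- The action `x ↦ Tx` of the Toeplitz matrix with generating function `z⁻ⁿ φ(z)`, that is, with
entry `coeff (j + n - i) φ` in row `j` and column `i ≤ j + n`, and `0` for `i > j + n`. -/
noncomputable def toeplitzAction (φ : ℝ⟦X⟧) (n : ℕ) (x : ℕ → ℝ) (j : ℕ) : ℝ :=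
  coeff (j + n) (φ * mk x)

/-- The series `(φ(z) - zⁿ) / (1 - z)`. When the mass at `i` is moved to `i + l - n` in proportion
`coeff l φ`, its coefficient of index `m - i` is the net downward flux, per unit of mass at `i`,
through the cut between `m - n` and `m - n + 1`. -/
noncomputable def fluxSeries (φ : ℝ⟦X⟧) (n : ℕ) : ℝ⟦X⟧ :=
  (φ - X ^ n) * mk 1

variable {φ : ℝ⟦X⟧} {n : ℕ} {x : ℕ → ℝ}

theorem coeff_fluxSeries (φ : ℝ⟦X⟧) (n j : ℕ) :
    coeff j (fluxSeries φ n) = ∑ l ∈ range (j + 1), coeff l φ - if n ≤ j then 1 else 0 := by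
  rw [fluxSeries, sub_mul, map_sub, coeff_mul_mk_one, PowerSeries.coeff_X_pow_mul']
  simp

theorem coeff_fluxSeries_mul (hfix : IsFixedPt (toeplitzAction φ n) x) (m : ℕ) :
    coeff m (fluxSeries φ n * mk x) = ∑ k ∈ range (m + 1) with k < n, coeff k (φ * mk x) := by
  have hcoeff (k : ℕ) : coeff k ((φ - X ^ n) * mk x) =
      if k < n then coeff k (φ * mk x) else 0 := by
    rw [sub_mul, map_sub, PowerSeries.coeff_X_pow_mul', coeff_mk]
    split_ifs with hnk hkn hkn
    · omega
    · have := congrFun hfix (k - n)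
      rw [toeplitzAction, Nat.sub_add_cancel hnk] at this
      rw [this, sub_self]
    · rw [sub_zero]
    · omega
  rw [fluxSeries, mul_right_comm, coeff_mul_mk_one, sum_filter]
  exact sum_congr rfl fun k _ => hcoeff k

theorem coeff_fluxSeries_mul_of_le (hfix : IsFixedPt (toeplitzAction φ n) x) {m : ℕ}
    (hm : n ≤ m) :
    coeff m (fluxSeries φ n * mk x) = ∑ k ∈ range n, coeff k (φ * mk x) := by
  rw [coeff_fluxSeries_mul hfix]
  congr 1
  ext k
  simp only [mem_filter, mem_range]
  omega

theorem coeff_mul_mk_nonneg (hφ : ∀ i, 0 ≤ coeff i φ) (hx : ∀ i, 0 ≤ x i) (k : ℕ) :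
    0 ≤ coeff k (φ * mk x) :=
  coeff_mul_nonneg hφ (by simpa only [coeff_mk] using hx) k

theorem coeff_fluxSeries_mul_nonneg (hφ : ∀ i, 0 ≤ coeff i φ) (hx : ∀ i, 0 ≤ x i)
    (hfix : IsFixedPt (toeplitzAction φ n) x) (m : ℕ) :
    0 ≤ coeff m (fluxSeries φ n * mk x) := by
  rw [coeff_fluxSeries_mul hfix]
  exact sum_nonneg fun k _ => coeff_mul_mk_nonneg hφ hx k

theorem coeff_fluxSeries_mul_le (hφ : ∀ i, 0 ≤ coeff i φ) (hx : ∀ i, 0 ≤ x i)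
    (hfix : IsFixedPt (toeplitzAction φ n) x) (m : ℕ) :
    coeff m (fluxSeries φ n * mk x) ≤ ∑ k ∈ range n, coeff k (φ * mk x) := by
  rw [coeff_fluxSeries_mul hfix]
  refine sum_le_sum_of_subset_of_nonneg (fun k hk => ?_) fun k _ _ => coeff_mul_mk_nonneg hφ hx k
  exact mem_range.2 (mem_filter.1 hk).2

theorem coeff_fluxSeries_nonneg (hφ : ∀ i, 0 ≤ coeff i φ) {j : ℕ} (hj : j < n) :
    0 ≤ coeff j (fluxSeries φ n) := by
  rw [coeff_fluxSeries, if_neg hj.not_ge, sub_zero]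
  exact sum_nonneg fun i _ => hφ i

theorem coeff_fluxSeries_nonpos (hsum : ∀ m, ∑ i ∈ range m, coeff i φ ≤ 1) {j : ℕ} (hj : n ≤ j) :
    coeff j (fluxSeries φ n) ≤ 0 := by
  rw [coeff_fluxSeries, if_pos hj]
  exact sub_nonpos.2 (hsum _)

theorem abs_coeff_fluxSeries_le_one (hφ : ∀ i, 0 ≤ coeff i φ)
    (hsum : ∀ m, ∑ i ∈ range m, coeff i φ ≤ 1) (j : ℕ) : |coeff j (fluxSeries φ n)| ≤ 1 := by
  have h0 : 0 ≤ ∑ l ∈ range (j + 1), coeff l φ := sum_nonneg fun i _ => hφ i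
  have h1 := hsum (j + 1)
  rw [coeff_fluxSeries, abs_le]
  constructor <;> split_ifs <;> linarith

theorem hasSum_ite_lt_coeff (hone : HasSum (fun i => coeff i φ) 1) (j : ℕ) :
    HasSum (fun l => if j < l then coeff l φ else 0) ((if j < n then 1 else 0) -
      coeff j (fluxSeries φ n)) := by
  have htail := (hasSum_nat_add_iff' (j + 1)).2 hone
  rw [← hasSum_nat_add_iff' (j + 1)]
  convert htail using 1
  · ext i
    rw [if_pos (by omega)]
  · rw [sum_eq_zero fun i hi => if_neg (by rw [mem_range] at hi; omega), coeff_fluxSeries]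
    split_ifs <;> first | omega | ring

theorem hasSum_min_mul_coeff (hone : HasSum (fun i => coeff i φ) 1) {M : ℕ} (hM : n ≤ M) :
    HasSum (fun l : ℕ => (min l M : ℕ) * coeff l φ)
      (n - ∑ j ∈ range M, coeff j (fluxSeries φ n)) := by
  have hfilter {k : ℕ} : ({j ∈ range M | j < k} : Finset ℕ) = range (min k M) := by
    ext j
    simp only [mem_filter, mem_range]
    omega
  have hterm (l : ℕ) : ∑ j ∈ range M, (if j < l then coeff l φ else 0) =
      (min l M : ℕ) * coeff l φ := by
    rw [← sum_filter, hfilter, sum_const, card_range, nsmul_eq_mul]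
  have hvalue : ∑ j ∈ range M, ((if j < n then 1 else 0) - coeff j (fluxSeries φ n)) =
      n - ∑ j ∈ range M, coeff j (fluxSeries φ n) := by
    rw [sum_sub_distrib, sum_boole, hfilter, card_range, min_eq_left hM]
  simpa only [hterm, hvalue] using
    hasSum_sum fun j (_ : j ∈ range M) => hasSum_ite_lt_coeff (n := n) hone j

theorem exists_le_of_isFixedPt_of_tsum_lt (hn : 0 < n) (hφ : ∀ i, 0 ≤ coeff i φ)
    (hone : HasSum (fun i => coeff i φ) 1) (hx : ∀ i, 0 ≤ x i)
    (hfix : IsFixedPt (toeplitzAction φ n) x)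
    (hmean : Summable fun i : ℕ => i * coeff i φ) (hlt : ∑' i : ℕ, i * coeff i φ < n) :
    ∃ C, ∀ i, x i ≤ C := by
  have hsum (m : ℕ) : ∑ i ∈ range m, coeff i φ ≤ 1 := sum_le_hasSum _ (fun i _ => hφ i) hone
  have hdrift (M : ℕ) : n - ∑' i : ℕ, i * coeff i φ ≤
      ∑ j ∈ range (n + M), coeff j (fluxSeries φ n) := by
    have := hasSum_le (fun l => mul_le_mul_of_nonneg_right
      (Nat.cast_le.2 (min_le_left l (n + M))) (hφ l))
      (hasSum_min_mul_coeff hone (Nat.le_add_right n M)) hmean.hasSum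
    linarith
  simpa only [coeff_mk] using exists_coeff_le_of_coeff_mul_le hn
    (fun j => coeff_fluxSeries_nonneg hφ) (fun j => coeff_fluxSeries_nonpos hsum)
    (by simpa only [coeff_mk] using hx)
    (sum_nonneg fun k _ => coeff_mul_mk_nonneg hφ hx k)
    (coeff_fluxSeries_mul_le hφ hx hfix) (sub_pos.2 hlt) hdrift

theorem summable_and_tsum_lt_of_isFixedPt_of_le {C : ℝ} (hφ : ∀ i, 0 ≤ coeff i φ)
    (hone : HasSum (fun i => coeff i φ) 1) (hx : ∀ i, 0 ≤ x i)
    (hfix : IsFixedPt (toeplitzAction φ n) x)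
    (hflux : 0 < ∑ k ∈ range n, coeff k (φ * mk x)) (hC : ∀ i, x i ≤ C) :
    (Summable fun i : ℕ => i * coeff i φ) ∧ ∑' i : ℕ, i * coeff i φ < n := by
  set P := ∑ k ∈ range n, coeff k (φ * mk x)
  have hsum (m : ℕ) : ∑ i ∈ range m, coeff i φ ≤ 1 := sum_le_hasSum _ (fun i _ => hφ i) hone
  have hflux_le (M : ℕ) (hM : n ≤ M) : P ≤ C * ∑ j ∈ range M, coeff j (fluxSeries φ n) :=
    le_mul_sum_of_le_coeff_mul (abs_coeff_fluxSeries_le_one hφ hsum)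
      (fun j hj => coeff_fluxSeries_nonpos hsum (hM.trans hj))
      (by simpa only [coeff_mk] using hx) (by simpa only [coeff_mk] using hC) hflux
      (coeff_fluxSeries_mul_nonneg hφ hx hfix)
      fun m hm => (coeff_fluxSeries_mul_of_le hfix hm).ge
  have hCpos : 0 < C := by
    refine ((hx 0).trans (hC 0)).lt_of_ne fun hC0 => hflux.not_ge ?_
    simpa [← hC0] using hflux_le n le_rfl
  have hpartial (M : ℕ) : ∑ l ∈ range M, (l : ℝ) * coeff l φ ≤ n - P / C := by
    have htrunc := sum_le_hasSum (range M)
      (fun l _ => mul_nonneg (Nat.cast_nonneg _) (hφ l))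
      (hasSum_min_mul_coeff hone (le_max_right M n))
    have heq : ∑ l ∈ range M, (l : ℝ) * coeff l φ =
        ∑ l ∈ range M, (min l (max M n) : ℕ) * coeff l φ :=
      sum_congr rfl fun l hl => by rw [min_eq_left (by rw [mem_range] at hl; omega)]
    have hdrift := (div_le_iff₀' hCpos).2 (hflux_le _ (le_max_right M n))
    linarith
  have hterm (i : ℕ) : 0 ≤ (i : ℝ) * coeff i φ := mul_nonneg i.cast_nonneg (hφ i)
  exact ⟨summable_of_sum_range_le hterm hpartial,
    (Real.tsum_le_of_sum_range_le hterm hpartial).trans_lt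
      (sub_lt_self _ (div_pos hflux hCpos))⟩

end Toeplitz

section Existence

theorem exists_isFixedPt_of_monotoneOn_Icc {α : Type*} [ConditionallyCompleteLattice α] {a b : α}
    {f : α → α} (hab : a ≤ b) (hf : MonotoneOn f (Set.Icc a b))
    (hmaps : Set.MapsTo f (Set.Icc a b) (Set.Icc a b)) : ∃ x ∈ Set.Icc a b, IsFixedPt f x := by
  have : Fact (a ≤ b) := ⟨hab⟩
  let F : Set.Icc a b →o Set.Icc a b :=
    ⟨hmaps.restrict, fun x y hxy => hf x.2 y.2 hxy⟩
  exact ⟨F.lfp, F.lfp.2, congrArg Subtype.val F.map_lfp⟩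

theorem exists_dirichlet_solution {ι α : Type*} [ConditionallyCompleteLattice α] {a b g : ι → α}
    {f : (ι → α) → ι → α} (hf : MonotoneOn f (Set.Icc a b))
    (hmaps : Set.MapsTo f (Set.Icc a b) (Set.Icc a b)) (D : Set ι) (hg : g ∈ Set.Icc a b) :
    ∃ h ∈ Set.Icc a b, Set.EqOn h (f h) D ∧ Set.EqOn h g Dᶜ := by
  classical
  obtain ⟨h, hmem, hfix⟩ := exists_isFixedPt_of_monotoneOn_Icc (f := fun x => D.piecewise (f x) g)
    (hg.1.trans hg.2)
    (fun x hx y hy hxy => Set.piecewise_mono (fun i _ => hf hx hy hxy i) fun _ _ => le_rfl)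
    fun x hx => Set.piecewise_mem_Icc' (hmaps hx) hg
  have hpiece : D.piecewise (f h) g = h := hfix
  refine ⟨h, hmem, fun i hi => ?_, fun i hi => ?_⟩
  · rw [← Set.piecewise_eq_of_mem D (f h) g hi, hpiece]
  · rw [← Set.piecewise_eq_of_notMem D (f h) g hi, hpiece]

theorem le_pow_mul_sum_range {h : ℕ → ℝ} {n : ℕ} {c : ℝ} (hn : 0 < n) (hc : 1 ≤ c)
    (hh : ∀ j, 0 ≤ h j) (hstep : ∀ j, h (j + n) ≤ c * h j) (j : ℕ) :
    h j ≤ c ^ j * ∑ r ∈ range n, h r := by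
  have hs : 0 ≤ ∑ r ∈ range n, h r := sum_nonneg fun r _ => hh r
  induction j using Nat.strong_induction_on with
  | _ j ih =>
    rcases lt_or_ge j n with hj | hj
    · exact (single_le_sum (fun r _ => hh r) (mem_range.2 hj)).trans
        (le_mul_of_one_le_left hs (one_le_pow₀ hc))
    · obtain ⟨m, rfl⟩ := Nat.exists_eq_add_of_le' hj
      calc h (m + n) ≤ c * h m := hstep m
        _ ≤ c * (c ^ m * ∑ r ∈ range n, h r) := by gcongr; exact ih m (by omega)
        _ = c ^ (m + 1) * ∑ r ∈ range n, h r := by ring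
        _ ≤ c ^ (m + n) * ∑ r ∈ range n, h r := by gcongr; exact hn

variable {φ : ℝ⟦X⟧} {n : ℕ}

theorem toeplitzAction_apply (φ : ℝ⟦X⟧) (n : ℕ) (x : ℕ → ℝ) (j : ℕ) :
    toeplitzAction φ n x j = ∑ p ∈ antidiagonal (j + n), coeff p.1 φ * x p.2 := by
  simp only [toeplitzAction, coeff_mul, coeff_mk]

theorem toeplitzAction_mono (hφ : ∀ i, 0 ≤ coeff i φ) : Monotone (toeplitzAction φ n) := by
  intro x y hxy j
  simp only [toeplitzAction_apply]
  exact sum_le_sum fun p _ => mul_le_mul_of_nonneg_left (hxy _) (hφ _)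

theorem continuous_toeplitzAction_apply (φ : ℝ⟦X⟧) (n j : ℕ) :
    Continuous fun x => toeplitzAction φ n x j := by
  simp only [toeplitzAction_apply]
  fun_prop

theorem toeplitzAction_smul (φ : ℝ⟦X⟧) (n : ℕ) (c : ℝ) (x : ℕ → ℝ) :
    toeplitzAction φ n (c • x) = c • toeplitzAction φ n x := by
  ext j
  simp only [toeplitzAction_apply, Pi.smul_apply, smul_eq_mul, mul_sum]
  exact sum_congr rfl fun p _ => by ring

theorem mapsTo_toeplitzAction_Icc (hφ : ∀ i, 0 ≤ coeff i φ)
    (hsum : ∀ m, ∑ i ∈ range m, coeff i φ ≤ 1) :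
    Set.MapsTo (toeplitzAction φ n) (Set.Icc 0 1) (Set.Icc 0 1) := by
  have hzero : toeplitzAction φ n 0 = 0 := by simpa using toeplitzAction_smul φ n 0 0
  have hone : toeplitzAction φ n 1 ≤ 1 := fun j =>
    (coeff_mul_mk_one φ (j + n)).trans_le (hsum (j + n + 1))
  intro x hx
  exact ⟨hzero.ge.trans (toeplitzAction_mono hφ hx.1), (toeplitzAction_mono hφ hx.2).trans hone⟩

theorem coeff_zero_mul_le_coeff_mul (hφ : ∀ i, 0 ≤ coeff i φ) {x : ℕ → ℝ} (hx : ∀ i, 0 ≤ x i)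
    (k : ℕ) : coeff 0 φ * x k ≤ coeff k (φ * mk x) := by
  simp only [coeff_mul, coeff_mk]
  have hmem : (0, k) ∈ antidiagonal k := mem_antidiagonal.2 (zero_add k)
  exact single_le_sum (f := fun p : ℕ × ℕ => coeff p.1 φ * x p.2)
    (fun p _ => mul_nonneg (hφ _) (hx _)) hmem

theorem coeff_zero_mul_sum_le_sum_coeff_mul (hφ : ∀ i, 0 ≤ coeff i φ) {x : ℕ → ℝ}
    (hx : ∀ i, 0 ≤ x i) (s : Finset ℕ) :
    coeff 0 φ * ∑ k ∈ s, x k ≤ ∑ k ∈ s, coeff k (φ * mk x) := by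
  rw [mul_sum]
  exact sum_le_sum fun k _ => coeff_zero_mul_le_coeff_mul hφ hx k

/-- The nonnegative sequences with `∑ r ∈ range n, x r = 1` that solve the first `N` equations of
`x = Tx` and obey the growth bound `x j ≤ (coeff 0 φ)⁻¹ ^ j`, which makes the set compact. -/
def truncatedSolutions (φ : ℝ⟦X⟧) (n N : ℕ) : Set (ℕ → ℝ) :=
  {x | (∀ j, x j ∈ Set.Icc 0 ((coeff 0 φ)⁻¹ ^ j)) ∧ ∑ r ∈ range n, x r = 1 ∧
    ∀ j < N, toeplitzAction φ n x j = x j}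

theorem isClosed_truncatedSolutions (φ : ℝ⟦X⟧) (n N : ℕ) :
    IsClosed (truncatedSolutions φ n N) := by
  simp only [truncatedSolutions, Set.ofPred_and, Set.ofPred_forall]
  refine .inter (isClosed_iInter fun j => isClosed_Icc.preimage (continuous_apply j)) (.inter ?_ ?_)
  · exact isClosed_eq (by fun_prop) continuous_const
  · exact isClosed_biInter fun j _ =>
      isClosed_eq (continuous_toeplitzAction_apply φ n j) (continuous_apply j)

theorem isCompact_truncatedSolutions (φ : ℝ⟦X⟧) (n N : ℕ) :
    IsCompact (truncatedSolutions φ n N) :=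
  (isCompact_univ_pi fun _ => isCompact_Icc).of_isClosed_subset
    (isClosed_truncatedSolutions φ n N) fun _ hx j _ => hx.1 j

theorem nonempty_truncatedSolutions (hn : 0 < n) (hφ : ∀ i, 0 ≤ coeff i φ)
    (hφ0 : 0 < coeff 0 φ) (hsum : ∀ m, ∑ i ∈ range m, coeff i φ ≤ 1) (N : ℕ) :
    (truncatedSolutions φ n N).Nonempty := by
  have hc : 1 ≤ (coeff 0 φ)⁻¹ := (one_le_inv₀ hφ0).2 (by simpa using hsum 1)
  obtain ⟨h, ⟨hh, -⟩, hin, hout⟩ := exists_dirichlet_solution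
    (g := fun j => if j < N + n then (1 : ℝ) else 0) ((toeplitzAction_mono hφ).monotoneOn _)
    (mapsTo_toeplitzAction_Icc (n := n) hφ hsum) (Set.Iio N)
    ⟨fun j => by dsimp; split_ifs <;> simp, fun j => by dsimp; split_ifs <;> simp⟩
  have hN : h N = 1 := (hout (Set.notMem_Iio.2 le_rfl)).trans (if_pos (by omega))
  have hstep (j : ℕ) : h (j + n) ≤ (coeff 0 φ)⁻¹ * h j := by
    rcases lt_or_ge j N with hj | hj
    · rw [le_inv_mul_iff₀ hφ0, hin hj]
      exact coeff_zero_mul_le_coeff_mul hφ hh (j + n)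
    · have hzero : h (j + n) = 0 :=
        (hout (Set.notMem_Iio.2 (by omega))).trans (if_neg (by omega))
      rw [hzero]
      exact mul_nonneg (inv_nonneg.2 hφ0.le) (hh j)
  set s := ∑ r ∈ range n, h r
  have hgrowth := le_pow_mul_sum_range hn hc hh hstep
  have hspos : 0 < s :=
    pos_of_mul_pos_right (zero_lt_one.trans_le (hN ▸ hgrowth N)) (by positivity)
  refine ⟨s⁻¹ • h, fun j => ⟨mul_nonneg (inv_nonneg.2 hspos.le) (hh j), ?_⟩, ?_, fun j hj => ?_⟩
  · exact (inv_mul_le_iff₀' hspos).2 (hgrowth j)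
  · simp only [Pi.smul_apply, smul_eq_mul, ← mul_sum]
    exact inv_mul_cancel₀ hspos.ne'
  · rw [toeplitzAction_smul, Pi.smul_apply, Pi.smul_apply, ← hin hj]

theorem exists_isFixedPt_toeplitzAction (hn : 0 < n) (hφ : ∀ i, 0 ≤ coeff i φ)
    (hφ0 : 0 < coeff 0 φ) (hsum : ∀ m, ∑ i ∈ range m, coeff i φ ≤ 1) :
    ∃ x, (∀ j, 0 ≤ x j) ∧ 0 < ∑ r ∈ range n, x r ∧ IsFixedPt (toeplitzAction φ n) x := by
  obtain ⟨x, hx⟩ := IsCompact.nonempty_iInter_of_sequence_nonempty_isCompact_isClosed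
    (truncatedSolutions φ n) (fun N x hx => ⟨hx.1, hx.2.1, fun j hj => hx.2.2 j (by omega)⟩)
    (nonempty_truncatedSolutions hn hφ hφ0 hsum) (isCompact_truncatedSolutions φ n 0)
    (isClosed_truncatedSolutions φ n)
  rw [Set.mem_iInter] at hx
  exact ⟨x, fun j => ((hx 0).1 j).1, zero_lt_one.trans_eq (hx 0).2.1.symm,
    funext fun j => (hx (j + 1)).2.2 j (Nat.lt_succ_self j)⟩

end Existence

/-- The series `τ(z) = Σ_{i=0}^∞ t(i-n) zⁱ` of the paper. -/
noncomputable def symbolSeries (t : ℤ → ℝ) (n : ℕ) : ℝ⟦X⟧ :=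
  mk fun i => t ((i : ℤ) - (n : ℤ))

theorem coeff_symbolSeries (t : ℤ → ℝ) (n i : ℕ) :
    coeff i (symbolSeries t n) = t ((i : ℤ) - (n : ℤ)) :=
  coeff_mk _ _

theorem hasSum_toeplitz_row {t : ℤ → ℝ} {n : ℕ} (hzero : ∀ j : ℤ, (n : ℤ) < j → t (-j) = 0)
    (x : ℕ → ℝ) (j : ℕ) :
    HasSum (fun i : ℕ => t ((j : ℤ) - (i : ℤ)) * x i)
      (toeplitzAction (symbolSeries t n) n x j) := by
  rw [toeplitzAction_apply, ← Nat.sum_antidiagonal_swap,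
    Nat.sum_antidiagonal_eq_sum_range_succ_mk]
  have hrow : ∑ i ∈ range (j + n).succ, coeff (j + n - i) (symbolSeries t n) * x i =
      ∑ i ∈ range (j + n).succ, t ((j : ℤ) - (i : ℤ)) * x i := by
    refine sum_congr rfl fun i hi => ?_
    rw [mem_range] at hi
    rw [coeff_symbolSeries, show ((j + n - i : ℕ) : ℤ) - n = j - i by omega]
  refine hrow ▸ hasSum_sum_of_ne_finset_zero fun i hi => ?_
  rw [mem_range] at hi
  rw [← neg_sub, hzero _ (by omega), zero_mul]

theorem isPosToeplitzSolution_iff {t : ℤ → ℝ} {n : ℕ}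
    (hzero : ∀ j : ℤ, (n : ℤ) < j → t (-j) = 0) {x : ℕ → ℝ} :
    IsPosToeplitzSolution t x ↔
      (∀ i, 0 ≤ x i) ∧ (∃ i, 0 < x i) ∧ IsFixedPt (toeplitzAction (symbolSeries t n) n) x := by
  have hrow (j : ℕ) : HasSum (fun i : ℕ => t ((j : ℤ) - (i : ℤ)) * x i) (x j) ↔
      toeplitzAction (symbolSeries t n) n x j = x j :=
    ⟨(hasSum_toeplitz_row hzero x j).unique, fun h => h ▸ hasSum_toeplitz_row hzero x j⟩
  simp only [IsPosToeplitzSolution, hrow, IsFixedPt, funext_iff]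

theorem toeplitz_sum_eq_one_bounded_iff_general
    (t : ℤ → ℝ) (ht : ∀ i : ℤ, 0 ≤ t i)
    (n : ℕ) (hn : 1 ≤ n) (htn : 0 < t (-(n : ℤ)))
    (hzero : ∀ j : ℤ, (n : ℤ) < j → t (-j) = 0)
    (hone : HasSum (fun i : ℕ => t ((i : ℤ) - (n : ℤ))) 1) :
    (∀ x : ℕ → ℝ, IsPosToeplitzSolution t x → ∃ C : ℝ, ∀ i, x i ≤ C) ↔
      (Summable (fun i : ℕ => (i : ℝ) * t ((i : ℤ) - (n : ℤ))) ∧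
        ∑' i : ℕ, (i : ℝ) * t ((i : ℤ) - (n : ℤ)) < (n : ℝ)) := by
  simp only [← coeff_symbolSeries] at hone ⊢
  have hφ (i : ℕ) : 0 ≤ coeff i (symbolSeries t n) := coeff_symbolSeries t n i ▸ ht _
  have hφ0 : 0 < coeff 0 (symbolSeries t n) := by simpa [coeff_symbolSeries] using htn
  refine ⟨fun hbdd => ?_, fun ⟨hmean, hlt⟩ x hx => ?_⟩
  · obtain ⟨x, hx, hsum, hfix⟩ := exists_isFixedPt_toeplitzAction hn hφ hφ0
      fun m => sum_le_hasSum _ (fun i _ => hφ i) hone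
    have hflux := (mul_pos hφ0 hsum).trans_le (coeff_zero_mul_sum_le_sum_coeff_mul hφ hx (range n))
    obtain ⟨i, -, hi⟩ := exists_lt_of_sum_lt (sum_const_zero.trans_lt hsum)
    obtain ⟨C, hC⟩ := hbdd x ((isPosToeplitzSolution_iff hzero).2 ⟨hx, ⟨i, hi⟩, hfix⟩)
    exact summable_and_tsum_lt_of_isFixedPt_of_le hφ hone hx hfix hflux hC
  · obtain ⟨hx0, -, hfix⟩ := (isPosToeplitzSolution_iff hzero).1 hx
    exact exists_le_of_isFixedPt_of_tsum_lt hn hφ hone hx0 hfix hmean hlt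

/-- Theorem 1.1(ii): if `Σ_{i=0}^∞ t(i-n) = 1` and the derivative of
`z ↦ (τ(z))^{1/n}` is increasing on `[0,1]`, then every positive solution of
`x = Tx` is bounded if and only if `Σ_{i=0}^∞ i·t(i-n) < n`. -/
theorem toeplitz_sum_eq_one_bounded_iff
    (t : ℤ → ℝ) (ht : ∀ i : ℤ, 0 ≤ t i)
    (n : ℕ) (hn : 1 ≤ n) (htn : 0 < t (-(n : ℤ)))
    (hzero : ∀ j : ℤ, (n : ℤ) < j → t (-j) = 0)
    (hone : HasSum (fun i : ℕ => t ((i : ℤ) - (n : ℤ))) 1)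
    (hderiv : MonotoneOn
      (deriv fun z : ℝ => (∑' i : ℕ, t ((i : ℤ) - (n : ℤ)) * z ^ i) ^ (1 / (n : ℝ)))
      (Set.Icc (0 : ℝ) 1)) :
    (∀ x : ℕ → ℝ, IsPosToeplitzSolution t x → ∃ C : ℝ, ∀ i, x i ≤ C) ↔
      (Summable (fun i : ℕ => (i : ℝ) * t ((i : ℤ) - (n : ℤ))) ∧
        ∑' i : ℕ, (i : ℝ) * t ((i : ℤ) - (n : ℤ)) < (n : ℝ)) :=
  toeplitz_sum_eq_one_bounded_iff_general t ht n hn htn hzero hone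
end

section
/- Let t : ℤ → ℝ be nonnegative with t(-1) > 0 and t(-j) = 0 for all j ≥ 2. Assume Σ_{i=0}^∞ t(i-1) = 1, that the derivative of the function z ↦ Σ_{i=0}^∞ t(i-1)·z^i is increasing on [0,1], and that Σ_{i=0}^∞ i·t(i-1) < 1. Then for every positive solution x of the fixed point equation x = Tx, the limit lim_{i→∞} x_i exists and equals x_0·t(-1) / (1 − Σ_{i=1}^∞ i·t(i-1)). -/
/-!
Put `p i = t (i - 1)` and let `P`, `F` be the power series with coefficients `p`, `x`. The fixed
point equation says `P * F = X * F + p 0 * x 0`. Since `∑ p i = 1`, the series `Q` of the tails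
`∑_{i > n} p i` satisfies `(1 - X) * Q = 1 - P`, so `D = (1 - X) * F`, the series of differences
of `x`, solves the renewal equation `D = p 0 * x 0 + Q * D`. The coefficients of `Q` are absolutely
summable with sum `∑ i * p i` and `ℓ¹` norm less than `1`. Hence `D` has absolutely summable
coefficients too, which means that `x` converges, and summing the renewal equation gives
`lim x = p 0 * x 0 + (∑ i * p i) * lim x`.
-/

open Finset hiding mk
open Filter Topology PowerSeries

section TailSum

/-- The tail `∑_{i > n} f i` of the series `∑ f i`, with junk value `0` if it diverges: the
kernel of the renewal equation satisfied by the differences of a fixed point. -/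
noncomputable def tailSum {M : Type*} [AddCommMonoid M] [TopologicalSpace M] (f : ℕ → M) (n : ℕ) :
    M :=
  ∑' i, f (i + (n + 1))

theorem one_sub_X_mul_mk_tailSum {R : Type*} [Ring R] [TopologicalSpace R]
    [IsTopologicalAddGroup R] [T2Space R] {f : ℕ → R} (hf : Summable f) :
    (1 - X) * mk (tailSum f) = C (∑' i, f i) - mk f := by
  ext (_ | n)
  · simp [tailSum, hf.tsum_eq_zero_add]
  · have hstep : tailSum f n = f (n + 1) + tailSum f (n + 1) := by
      rw [tailSum, ((summable_nat_add_iff (n + 1)).2 hf).tsum_eq_zero_add, zero_add]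
      exact congrArg (f (n + 1) + ·) (tsum_congr fun i => congrArg f (by lia))
    simp [sub_mul, hstep]

theorem sum_antidiagonal_snd_add_fst_add_one {M : Type*} [AddCommMonoid M] (f : ℕ → M) (n : ℕ) :
    ∑ kl ∈ antidiagonal n, f (kl.2 + (kl.1 + 1)) = (n + 1) • f (n + 1) := by
  have h : ∀ kl ∈ antidiagonal n, f (kl.2 + (kl.1 + 1)) = f (n + 1) := fun kl hkl => by
    rw [← mem_antidiagonal.1 hkl, ← add_assoc, add_comm kl.2]
  rw [sum_congr rfl h, sum_const, Nat.card_antidiagonal]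

variable {E : Type*} [SeminormedAddCommGroup E] {f : ℕ → E}

theorem summable_norm_of_summable_nat_mul_norm (hf : Summable fun n : ℕ => (n : ℝ) * ‖f n‖) :
    Summable fun n => ‖f n‖ := by
  refine hf.of_norm_bounded_eventually_nat ?_
  filter_upwards [eventually_ge_atTop 1] with n hn
  rw [norm_norm]
  exact le_mul_of_one_le_left (norm_nonneg _) (mod_cast hn)

theorem summable_norm_prod_snd_add_fst_add_one (hf : Summable fun n : ℕ => (n : ℝ) * ‖f n‖) :
    Summable fun kl : ℕ × ℕ => ‖f (kl.2 + (kl.1 + 1))‖ := by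
  rw [← HasAntidiagonal.sigmaAntidiagonalEquivProd.summable_iff]
  refine (summable_sigma_of_nonneg fun _ => norm_nonneg _).2 ?_
  refine ⟨fun n => (hasSum_fintype _).summable, ((summable_nat_add_iff 1).2 hf).congr fun n => ?_⟩
  have h := sum_antidiagonal_snd_add_fst_add_one (fun i => ‖f i‖) n
  rw [← sum_finset_coe, nsmul_eq_mul] at h
  simpa [tsum_fintype] using h.symm

theorem norm_tailSum_le (hf : Summable fun n => ‖f n‖) (n : ℕ) :
    ‖tailSum f n‖ ≤ tailSum (fun i => ‖f i‖) n :=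
  norm_tsum_le_tsum_norm ((summable_nat_add_iff (n + 1)).2 hf)

theorem hasSum_tailSum {E : Type*} [NormedAddCommGroup E] [CompleteSpace E] {f : ℕ → E}
    (hf : Summable fun n : ℕ => (n : ℝ) * ‖f n‖) :
    HasSum (tailSum f) (∑' n, n • f n) := by
  have hf' := (summable_norm_of_summable_nat_mul_norm hf).of_norm
  have hprod := (summable_norm_prod_snd_add_fst_add_one hf).of_norm
  have hsigma := HasAntidiagonal.sigmaAntidiagonalEquivProd.summable_iff.2 hprod
  have hnsmul : Summable fun n => n • f n :=
    .of_norm_bounded hf fun n => norm_nsmul_le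
  have hvalue : ∑' kl : ℕ × ℕ, f (kl.2 + (kl.1 + 1)) = ∑' n, n • f n := by
    rw [← HasAntidiagonal.sigmaAntidiagonalEquivProd.tsum_eq,
      hnsmul.tsum_eq_zero_add, zero_nsmul, zero_add]
    refine (hsigma.tsum_sigma' fun n => (hasSum_fintype _).summable).trans (tsum_congr fun n => ?_)
    rw [← sum_antidiagonal_snd_add_fst_add_one f n, ← sum_finset_coe]
    exact tsum_fintype _
  exact hvalue ▸ hprod.hasSum.prod_fiberwise fun n => ((summable_nat_add_iff (n + 1)).2 hf').hasSum

theorem hasSum_tailSum_norm (hf : Summable fun n : ℕ => (n : ℝ) * ‖f n‖) :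
    HasSum (tailSum fun n => ‖f n‖) (∑' n : ℕ, (n : ℝ) * ‖f n‖) := by
  simpa only [nsmul_eq_mul] using hasSum_tailSum (f := fun n => ‖f n‖) (by simpa only [norm_norm])

theorem summable_norm_tailSum (hf : Summable fun n : ℕ => (n : ℝ) * ‖f n‖) :
    Summable fun n => ‖tailSum f n‖ :=
  (hasSum_tailSum_norm hf).summable.of_nonneg_of_le (fun _ => norm_nonneg _)
    (norm_tailSum_le (summable_norm_of_summable_nat_mul_norm hf))

theorem tsum_norm_tailSum_le (hf : Summable fun n : ℕ => (n : ℝ) * ‖f n‖) :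
    ∑' n, ‖tailSum f n‖ ≤ ∑' n : ℕ, (n : ℝ) * ‖f n‖ :=
  hasSum_le (norm_tailSum_le (summable_norm_of_summable_nat_mul_norm hf))
    (summable_norm_tailSum hf).hasSum (hasSum_tailSum_norm hf)

end TailSum

section Renewal

theorem sum_range_coeff_one_sub_X_mul {R : Type*} [Ring R] (F : R⟦X⟧) (n : ℕ) :
    ∑ k ∈ range (n + 1), coeff k ((1 - X) * F) = coeff n F := by
  induction n with
  | zero => simp
  | succ n ih => rw [sum_range_succ, ih]; simp [sub_mul]

theorem sum_range_sum_antidiagonal_mul_le {R : Type*} [Semiring R] [PartialOrder R]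
    [IsOrderedRing R] {u v : ℕ → R} (hu : ∀ n, 0 ≤ u n) (hv : ∀ n, 0 ≤ v n) (N : ℕ) :
    ∑ n ∈ range N, ∑ kl ∈ antidiagonal n, u kl.1 * v kl.2 ≤
      (∑ n ∈ range N, u n) * ∑ n ∈ range N, v n := by
  simp only [Nat.sum_antidiagonal_eq_sum_range_succ fun k l => u k * v l]
  rw [sum_range_diag_flip N fun k l => u k * v l, sum_mul_sum]
  gcongr with k
  · exact fun l _ _ => mul_nonneg (hu k) (hv l)
  · exact Nat.sub_le N k

theorem norm_coeff_mul_le {R : Type*} [SeminormedRing R] (F G : R⟦X⟧) (n : ℕ) :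
    ‖coeff n (F * G)‖ ≤ ∑ kl ∈ antidiagonal n, ‖coeff kl.1 F‖ * ‖coeff kl.2 G‖ := by
  rw [coeff_mul]
  exact (norm_sum_le _ _).trans (sum_le_sum fun kl _ => norm_mul_le _ _)

theorem summable_norm_coeff_of_eq_add_mul {R : Type*} [SeminormedRing R] {A B F : R⟦X⟧}
    (hF : F = B + A * F)
    (hA : Summable fun n => ‖coeff n A‖) (hA1 : ∑' n, ‖coeff n A‖ < 1)
    (hB : Summable fun n => ‖coeff n B‖) : Summable fun n => ‖coeff n F‖ := by
  refine summable_of_sum_range_le (c := (∑' n, ‖coeff n B‖) / (1 - ∑' n, ‖coeff n A‖))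
    (fun n => norm_nonneg _) fun N => ?_
  set S := ∑ n ∈ range N, ‖coeff n F‖ with hS
  have hcoeff : ∀ n, ‖coeff n F‖ ≤
      ‖coeff n B‖ + ∑ kl ∈ antidiagonal n, ‖coeff kl.1 A‖ * ‖coeff kl.2 F‖ := fun n => by
    conv_lhs => rw [hF, map_add]
    exact norm_add_le_of_le (le_refl ‖coeff n B‖) (norm_coeff_mul_le A F n)
  have hle : S ≤ ∑' n, ‖coeff n B‖ + (∑' n, ‖coeff n A‖) * S := calc
    S ≤ ∑ n ∈ range N, ‖coeff n B‖ +
          ∑ n ∈ range N, ∑ kl ∈ antidiagonal n, ‖coeff kl.1 A‖ * ‖coeff kl.2 F‖ := by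
        rw [hS, ← sum_add_distrib]
        exact sum_le_sum fun n _ => hcoeff n
    _ ≤ ∑ n ∈ range N, ‖coeff n B‖ + (∑ n ∈ range N, ‖coeff n A‖) * S := by
        gcongr
        exact sum_range_sum_antidiagonal_mul_le (fun n => norm_nonneg (coeff n A))
          (fun n => norm_nonneg (coeff n F)) N
    _ ≤ ∑' n, ‖coeff n B‖ + (∑' n, ‖coeff n A‖) * S := by
        gcongr
        · exact hB.sum_le_tsum _ fun _ _ => norm_nonneg _
        · exact hA.sum_le_tsum _ fun _ _ => norm_nonneg _
  rw [le_div_iff₀ (sub_pos.2 hA1)]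
  linarith

theorem tsum_coeff_eq_add_mul {R : Type*} [NormedRing R] [CompleteSpace R] {A B F : R⟦X⟧}
    (hF : F = B + A * F) (hA : Summable fun n => ‖coeff n A‖) (hB : Summable fun n => coeff n B)
    (hFsum : Summable fun n => ‖coeff n F‖) :
    ∑' n, coeff n F = ∑' n, coeff n B + (∑' n, coeff n A) * ∑' n, coeff n F := by
  have hconv := (summable_norm_sum_mul_antidiagonal_of_summable_norm hA hFsum).of_norm
  rw [tsum_mul_tsum_eq_tsum_sum_antidiagonal_of_summable_norm hA hFsum, ← hB.tsum_add hconv]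
  refine tsum_congr fun n => ?_
  conv_lhs => rw [hF, map_add, coeff_mul]

theorem hasSum_coeff_of_eq_add_mul {𝕜 : Type*} [NormedField 𝕜] [CompleteSpace 𝕜] {A B F : 𝕜⟦X⟧}
    (hF : F = B + A * F) (hA : Summable fun n => ‖coeff n A‖) (hA1 : ∑' n, ‖coeff n A‖ < 1)
    (hB : Summable fun n => ‖coeff n B‖) :
    HasSum (fun n => coeff n F) ((∑' n, coeff n B) / (1 - ∑' n, coeff n A)) := by
  have hnorm : ‖∑' n, coeff n A‖ < 1 := (norm_tsum_le_tsum_norm hA).trans_lt hA1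
  have hne : 1 - ∑' n, coeff n A ≠ 0 := sub_ne_zero.2 fun h => by simp [← h] at hnorm
  have hFsum := summable_norm_coeff_of_eq_add_mul hF hA hA1 hB
  rw [hFsum.of_norm.hasSum_iff, eq_div_iff hne]
  linear_combination tsum_coeff_eq_add_mul hF hA hB.of_norm hFsum

theorem hasSum_coeff_C {R : Type*} [Semiring R] [TopologicalSpace R] (c : R) :
    HasSum (fun n => coeff n (C c)) c := by
  simpa only [coeff_C] using hasSum_ite_eq 0 c

theorem summable_norm_coeff_C {R : Type*} [SeminormedRing R] (c : R) :
    Summable fun n => ‖coeff n (C c)‖ :=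
  summable_of_ne_finset_zero (s := {0}) fun n hn => by
    rw [coeff_C, if_neg (by simpa using hn), norm_zero]

end Renewal

section Toeplitz

theorem eq_sum_antidiagonal_of_hasSum_toeplitz {R : Type*} [Semiring R] [TopologicalSpace R]
    [T2Space R] {t : ℤ → R} (hzero : ∀ j : ℤ, 2 ≤ j → t (-j) = 0) {x : ℕ → R} {j : ℕ} {y : R}
    (hy : HasSum (fun i : ℕ => t ((j : ℤ) - i) * x i) y) :
    y = ∑ kl ∈ antidiagonal (j + 1), t ((kl.1 : ℤ) - 1) * x kl.2 := by
  have hvanish : ∀ i ∉ range (j + 2), t ((j : ℤ) - i) * x i = 0 := fun i hi => by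
    have hi : j + 2 ≤ i := by simpa using hi
    rw [← neg_sub, hzero _ (by lia), zero_mul]
  rw [hy.unique (hasSum_sum_of_ne_finset_zero hvanish), ← Nat.sum_antidiagonal_swap]
  simp only [Prod.fst_swap, Prod.snd_swap]
  rw [Nat.sum_antidiagonal_eq_sum_range_succ fun k l => t ((l : ℤ) - 1) * x k]
  refine sum_congr rfl fun i hi => ?_
  rw [Nat.cast_sub (mem_range_succ_iff.1 hi), Nat.cast_succ, sub_right_comm, add_sub_cancel_right]

theorem mk_mul_mk_eq_of_forall_eq_sum_antidiagonal {R : Type*} [Semiring R] {p x : ℕ → R}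
    (hx : ∀ j, x j = ∑ kl ∈ antidiagonal (j + 1), p kl.1 * x kl.2) :
    mk p * mk x = X * mk x + C (p 0 * x 0) := by
  ext (_ | j)
  · simp
  · rw [map_add, coeff_succ_X_mul, coeff_mul]
    simp [← hx j]

variable {𝕜 : Type*} [NormedField 𝕜] [CompleteSpace 𝕜]

theorem tendsto_of_forall_eq_sum_antidiagonal {p x : ℕ → 𝕜} (hone : HasSum p 1)
    (hsum : Summable fun n : ℕ => (n : ℝ) * ‖p n‖) (hlt : ∑' n : ℕ, (n : ℝ) * ‖p n‖ < 1)
    (hx : ∀ j, x j = ∑ kl ∈ antidiagonal (j + 1), p kl.1 * x kl.2) :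
    Tendsto x atTop (𝓝 (x 0 * p 0 / (1 - ∑' n : ℕ, (n : 𝕜) * p n))) := by
  set D := (1 - X) * mk x with hDdef
  have hF := mk_mul_mk_eq_of_forall_eq_sum_antidiagonal hx
  have hP : (1 - X) * mk (tailSum p) = 1 - mk p := by
    rw [one_sub_X_mul_mk_tailSum hone.summable, hone.tsum_eq, map_one]
  have hD : D = C (p 0 * x 0) + mk (tailSum p) * D := by
    linear_combination hF - mk x * hP
  have hQ : Summable fun n => ‖coeff n (mk (tailSum p))‖ := by
    simpa only [coeff_mk] using summable_norm_tailSum hsum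
  have hQ1 : ∑' n, ‖coeff n (mk (tailSum p))‖ < 1 := by
    simpa only [coeff_mk] using (tsum_norm_tailSum_le hsum).trans_lt hlt
  have hpartial := (hasSum_coeff_of_eq_add_mul hD hQ hQ1 (summable_norm_coeff_C _)).tendsto_sum_nat
  rw [← tendsto_add_atTop_iff_nat 1] at hpartial
  simpa only [hDdef, sum_range_coeff_one_sub_X_mul, (hasSum_coeff_C _).tsum_eq, coeff_mk,
    (hasSum_tailSum hsum).tsum_eq, nsmul_eq_mul, mul_comm (p 0)] using hpartial

theorem toeplitz_n_eq_one_limit_general {t : ℤ → 𝕜} (hzero : ∀ j : ℤ, 2 ≤ j → t (-j) = 0)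
    (hone : HasSum (fun i : ℕ => t ((i : ℤ) - 1)) 1)
    (hsum : Summable (fun i : ℕ => (i : ℝ) * ‖t ((i : ℤ) - 1)‖))
    (hlt : ∑' i : ℕ, (i : ℝ) * ‖t ((i : ℤ) - 1)‖ < 1)
    {x : ℕ → 𝕜} (hx : ∀ j : ℕ, HasSum (fun i : ℕ => t ((j : ℤ) - (i : ℤ)) * x i) (x j)) :
    Tendsto x atTop
      (𝓝 (x 0 * t (-1) / (1 - ∑' i : ℕ, (i : 𝕜) * t ((i : ℤ) - 1)))) := by
  simpa using tendsto_of_forall_eq_sum_antidiagonal hone hsum hlt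
    fun j => eq_sum_antidiagonal_of_hasSum_toeplitz hzero (hx j)

end Toeplitz

/-- The `n = 1` case of Theorem 1.1(ii): if `Σ_{i=0}^∞ t(i-1) = 1`, the
derivative of `z ↦ Σ_{i=0}^∞ t(i-1)·z^i` is increasing on `[0,1]` and
`Σ_{i=0}^∞ i·t(i-1) < 1`, then for every positive solution `x` of `x = Tx`
the limit of `x_i` exists and equals `x_0·t(-1)/(1 − Σ_{i=1}^∞ i·t(i-1))`. -/
theorem toeplitz_n_eq_one_limit
    (t : ℤ → ℝ) (ht : ∀ i : ℤ, 0 ≤ t i)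
    (htn : 0 < t (-1))
    (hzero : ∀ j : ℤ, 2 ≤ j → t (-j) = 0)
    (hone : HasSum (fun i : ℕ => t ((i : ℤ) - 1)) 1)
    (hderiv : MonotoneOn
      (deriv fun z : ℝ => ∑' i : ℕ, t ((i : ℤ) - 1) * z ^ i)
      (Set.Icc (0 : ℝ) 1))
    (hsum : Summable (fun i : ℕ => (i : ℝ) * t ((i : ℤ) - 1)))
    (hlt : ∑' i : ℕ, (i : ℝ) * t ((i : ℤ) - 1) < 1)
    (x : ℕ → ℝ) (hx : IsPosToeplitzSolution t x) :
    Filter.Tendsto x Filter.atTop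
      (nhds (x 0 * t (-1) / (1 - ∑' i : ℕ, (i : ℝ) * t ((i : ℤ) - 1)))) := by
  have hnorm : ∀ i, ‖t i‖ = t i := fun i => Real.norm_of_nonneg (ht i)
  exact toeplitz_n_eq_one_limit_general hzero hone (by simpa only [hnorm] using hsum)
    (by simpa only [hnorm] using hlt) hx.2.2
end

section
/- Let t : ℤ → ℝ be nonnegative and let n ≥ 1 be such that t(-n) > 0 and t(-j) = 0 for all j > n. Assume Σ_{i=0}^∞ t(i-n) < 1, and assume that the derivative of the function z ↦ (τ(z))^{1/n} is increasing on [0,1], where τ(z) = Σ_{i=0}^∞ t(i-n)·z^i. Then every positive solution of the fixed point equation x = Tx is unbounded. -/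
/-! A row of the Toeplitz matrix meets each index of `t` at most once, so `T` scales the supremum
norm of a bounded sequence by at most `∑ k, ‖t k‖ < 1`, and a bounded fixed point must vanish. -/

theorem hasSum_natCast_sub_iff {M : Type*} [AddCommMonoid M] [TopologicalSpace M] {f : ℤ → M}
    {n : ℤ} (hf : ∀ j, n < j → f (-j) = 0) {s : M} :
    HasSum (fun i : ℕ => f ((i : ℤ) - n)) s ↔ HasSum f s := by
  have shift_injective : Function.Injective fun i : ℕ => (i : ℤ) - n :=
    (sub_left_injective (b := n)).comp Nat.cast_injective
  refine shift_injective.hasSum_iff fun k hk => ?_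
  have hk_lt : n < -k := by
    by_contra! h
    exact hk ⟨(k + n).toNat, by grind⟩
  simpa only [neg_neg] using hf (-k) hk_lt

namespace IsPosToeplitzSolution

variable {t : ℤ → ℝ} {x : ℕ → ℝ}

theorem ne_zero (hx : IsPosToeplitzSolution t x) : x ≠ 0 := by
  obtain ⟨-, ⟨i, hi⟩, -⟩ := hx
  exact fun h => hi.ne' (congrFun h i)

theorem isBounded_range (hx : IsPosToeplitzSolution t x) {C : ℝ} (hC : ∀ i, x i ≤ C) :
    Bornology.IsBounded (Set.range x) :=
  (Metric.isBounded_Icc 0 C).subset (Set.range_subset_iff.2 fun i => ⟨hx.1 i, hC i⟩)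

end IsPosToeplitzSolution

section FixedPoint

variable {ι R E : Type*} [SeminormedRing R] [NormedAddCommGroup E] [Module R E] [IsBoundedSMul R E]

theorem norm_le_mul_of_hasSum_smul {a : ι → R} {x : ι → E} {y : E} {r M : ℝ}
    (ha : HasSum (fun i => ‖a i‖) r) (hx : ∀ i, ‖x i‖ ≤ M)
    (hy : HasSum (fun i => a i • x i) y) : ‖y‖ ≤ r * M :=
  hy.norm_le_of_bounded (ha.mul_right M) fun i =>
    (norm_smul_le _ _).trans (mul_le_mul_of_nonneg_left (hx i) (norm_nonneg _))

theorem eq_zero_of_hasSum_smul_of_tsum_norm_le {A : ι → ι → R} {x : ι → E} {r : ℝ} (hr : r < 1)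
    (hA : ∀ j, Summable fun i => ‖A j i‖) (hAr : ∀ j, ∑' i, ‖A j i‖ ≤ r)
    (hfix : ∀ j, HasSum (fun i => A j i • x i) (x j)) (hx : Bornology.IsBounded (Set.range x)) :
    x = 0 := by
  obtain ⟨C, hC⟩ := hx.exists_norm_le
  have le_sup : ∀ i, ‖x i‖ ≤ ⨆ i, ‖x i‖ :=
    le_ciSup ⟨C, Set.forall_mem_range.2 fun i => hC _ ⟨i, rfl⟩⟩
  have sup_nonneg : 0 ≤ ⨆ i, ‖x i‖ := Real.iSup_nonneg fun _ => norm_nonneg _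
  funext j
  have : Nonempty ι := ⟨j⟩
  have sup_le : ⨆ i, ‖x i‖ ≤ r * ⨆ i, ‖x i‖ := ciSup_le fun j =>
    (norm_le_mul_of_hasSum_smul (hA j).hasSum le_sup (hfix j)).trans
      (mul_le_mul_of_nonneg_right (hAr j) sup_nonneg)
  have sup_eq_zero : ⨆ i, ‖x i‖ = 0 := by nlinarith
  exact norm_le_zero_iff.1 ((le_sup j).trans_eq sup_eq_zero)

theorem toeplitz_sum_lt_one_unbounded_general {t : ℤ → R} {r : ℝ}
    (ht : HasSum (fun k => ‖t k‖) r) (hr : r < 1) {x : ℕ → E} (hx : x ≠ 0)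
    (hfix : ∀ j : ℕ, HasSum (fun i : ℕ => t ((j : ℤ) - (i : ℤ)) • x i) (x j)) :
    ¬ Bornology.IsBounded (Set.range x) := by
  have row_injective (j : ℕ) : Function.Injective fun i : ℕ => (j : ℤ) - (i : ℤ) :=
    sub_right_injective.comp Nat.cast_injective
  have row_summable (j : ℕ) : Summable fun i : ℕ => ‖t ((j : ℤ) - (i : ℤ))‖ :=
    ht.summable.comp_injective (row_injective j)
  have row_tsum_le (j : ℕ) : ∑' i : ℕ, ‖t ((j : ℤ) - (i : ℤ))‖ ≤ r :=
    ht.tsum_eq ▸ tsum_comp_le_tsum_of_inj ht.summable (fun _ => norm_nonneg _) (row_injective j)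
  exact mt (eq_zero_of_hasSum_smul_of_tsum_norm_le hr row_summable row_tsum_le hfix) hx

end FixedPoint

/-- Theorem 1.1(iii): if `Σ_{i=0}^∞ t(i-n) < 1` and the derivative of
`z ↦ (τ(z))^{1/n}` is increasing on `[0,1]`, then every positive solution of
`x = Tx` is unbounded. -/
theorem toeplitz_sum_lt_one_unbounded
    (t : ℤ → ℝ) (ht : ∀ i : ℤ, 0 ≤ t i)
    (n : ℕ) (hn : 1 ≤ n) (htn : 0 < t (-(n : ℤ)))
    (hzero : ∀ j : ℤ, (n : ℤ) < j → t (-j) = 0)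
    (hsum : Summable (fun i : ℕ => t ((i : ℤ) - (n : ℤ))))
    (hlt : ∑' i : ℕ, t ((i : ℤ) - (n : ℤ)) < 1)
    (hderiv : MonotoneOn
      (deriv fun z : ℝ => (∑' i : ℕ, t ((i : ℤ) - (n : ℤ)) * z ^ i) ^ (1 / (n : ℝ)))
      (Set.Icc (0 : ℝ) 1))
    (x : ℕ → ℝ) (hx : IsPosToeplitzSolution t x) :
    ¬ ∃ C : ℝ, ∀ i, x i ≤ C := by
  have norm_sum : HasSum (fun k => ‖t k‖) (∑' i : ℕ, t ((i : ℤ) - (n : ℤ))) := by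
    simpa only [Real.norm_of_nonneg (ht _)] using (hasSum_natCast_sub_iff hzero).1 hsum.hasSum
  exact fun ⟨_, hC⟩ =>
    toeplitz_sum_lt_one_unbounded_general norm_sum hlt hx.ne_zero hx.2.2 (hx.isBounded_range hC)
end

section
/- Let S be a real Banach space and let M ⊆ S be a nonempty, closed, convex subset. Let A : S → S and B : S → S be maps such that: (i) there is a constant α < 1 with ‖B x − B y‖ ≤ α‖x − y‖ for all x, y ∈ S; (ii) A is continuous on M and the image A(M) is contained in a compact subset of S; (iii) for all x ∈ S and y ∈ M, if x = B x + A y then x ∈ M. Then there exists y ∈ M with A y + B y = y. -/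
/-!
The map `I - B` is a homeomorphism of `S`, so `y = B y + A y` says that `y` is a fixed point of
`(I - B)⁻¹ ∘ A`, a self-map of `M` with relatively compact image: Schauder's theorem applies.

Schauder's theorem follows from Brouwer's theorem on a simplex. For a finite `ε`-net `v` of `T(M)`,
select continuously, for each `w` in the simplex, barycentric coordinates of a point `ε`-close to
`T (∑ i, w i • v i)`; a fixed point of this selection gives an `ε`-approximate fixed point of `T`.

A continuous map without fixed points can be smoothed to a `C¹` one, so Brouwer's theorem follows
from the non-existence of a `C¹` retraction `r` of a convex body `K` onto its frontier, proved by
the volume argument of Milnor and Rogers. Put `f = r - id`, which vanishes on the frontier. For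
small `t > 0` the map `id + t • f` is a bijection of `K`, so `∫_K det (1 + t • f') = vol K`. The
left side is a polynomial in `t`, hence the identity persists at `t = 1`, where the integrand
`det r'` vanishes because `r(K)` has empty interior.
-/

open Filter Function Metric MeasureTheory Module Set Topology
open scoped NNReal Polynomial RealInnerProductSpace

section PolynomialIntegral

theorem exists_polynomial_eval_eq_integral {α 𝕜 : Type*} [RCLike 𝕜] [MeasurableSpace α]
    {μ : Measure α} {p : α → 𝕜[X]} {n : ℕ} (hdeg : ∀ x, (p x).natDegree ≤ n)
    (hint : ∀ t, Integrable (fun x => (p x).eval t) μ) :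
    ∃ q : 𝕜[X], ∀ t, q.eval t = ∫ x, (p x).eval t ∂μ := by
  let s := Finset.range (n + 1)
  let node : ℕ → 𝕜 := Nat.cast
  have eval_interpolate (r : ℕ → 𝕜) (t : 𝕜) : (Lagrange.interpolate s node r).eval t =
      ∑ i ∈ s, r i * (Lagrange.basis s node i).eval t := by
    simp [Lagrange.interpolate_apply, Polynomial.eval_finsetSum]
  have eq_interpolate (x : α) :
      p x = Lagrange.interpolate s node fun i => (p x).eval (node i) := by
    refine Lagrange.eq_interpolate Nat.cast_injective.injOn ?_
    rw [Finset.card_range]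
    exact Polynomial.degree_le_natDegree.trans_lt
      (Nat.cast_lt.2 (Nat.lt_succ_of_le (hdeg x)))
  refine ⟨Lagrange.interpolate s node fun i => ∫ x, (p x).eval (node i) ∂μ, fun t => ?_⟩
  calc (Lagrange.interpolate s node fun i => ∫ x, (p x).eval (node i) ∂μ).eval t
      = ∫ x, ∑ i ∈ s, (p x).eval (node i) * (Lagrange.basis s node i).eval t ∂μ := by
        rw [eval_interpolate, integral_finsetSum _ fun i _ => (hint _).mul_const _]
        simp only [integral_mul_const]
    _ = ∫ x, (p x).eval t ∂μ := by
        refine integral_congr_ae (Eventually.of_forall fun x => ?_)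
        exact (eval_interpolate _ t).symm.trans (congrArg _ (eq_interpolate x).symm)

theorem exists_polynomial_eval_eq_det_smul_add {n R : Type*} [Fintype n] [DecidableEq n]
    [CommRing R] (A B : Matrix n n R) :
    ∃ p : R[X], p.natDegree ≤ Fintype.card n ∧ ∀ t, p.eval t = (t • A + B).det := by
  refine ⟨((Polynomial.X : R[X]) • A.map Polynomial.C + B.map Polynomial.C).det,
    Polynomial.natDegree_det_X_add_C_le A B, fun t => ?_⟩
  rw [← Polynomial.coe_evalRingHom, RingHom.map_det]
  congr 1
  ext i j
  simp [mul_comm t]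

theorem exists_polynomial_eval_eq_det_one_add_smul {R M : Type*} [CommRing R]
    [StrongRankCondition R] [AddCommGroup M] [Module R M] [Module.Free R M] [Module.Finite R M]
    (f : Module.End R M) :
    ∃ p : R[X], p.natDegree ≤ finrank R M ∧ ∀ t, p.eval t = LinearMap.det (1 + t • f) := by
  let b := Module.finBasis R M
  obtain ⟨p, hdeg, hp⟩ := exists_polynomial_eval_eq_det_smul_add (LinearMap.toMatrix b b f) 1
  refine ⟨p, hdeg.trans_eq (Fintype.card_fin _), fun t => ?_⟩
  rw [hp, ← LinearMap.det_toMatrix b, map_add, map_smul, LinearMap.toMatrix_one, add_comm]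

end PolynomialIntegral

section LipschitzPerturbation

theorem exists_homeomorph_id_add {E : Type*} [NormedAddCommGroup E] [NormedSpace ℝ E]
    [CompleteSpace E] {f : E → E} {c : ℝ≥0} (hf : LipschitzWith c f) (hc : c < 1) :
    ∃ e : E ≃ₜ E, ∀ x, e x = x + f x := by
  have happrox : ApproximatesLinearOn (fun x => x + f x)
      (ContinuousLinearEquiv.refl ℝ E : E →L[ℝ] E) univ c := by
    intro x _ y _
    simpa [add_sub_add_comm] using hf.norm_sub_le x y
  refine ⟨happrox.toHomeomorph _ ?_, fun _ => rfl⟩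
  refine (subsingleton_or_nontrivial E).imp_right fun (_ : Nontrivial E) => ?_
  change c < ‖ContinuousLinearMap.id ℝ E‖₊⁻¹
  rwa [ContinuousLinearMap.nnnorm_id, inv_one]

theorem inter_frontier_nonempty_of_isPreconnected {X : Type*} [TopologicalSpace X] {s t : Set X}
    (ht : IsPreconnected t) (hts : (t ∩ s).Nonempty) (hts' : (t ∩ sᶜ).Nonempty) :
    (t ∩ frontier s).Nonempty := by
  by_contra! h
  have hcover : t ⊆ interior s ∪ interior sᶜ := by
    rw [← compl_frontier_eq_union_interior]
    exact (disjoint_iff_inter_eq_empty.2 h).subset_compl_right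
  have hdisj : Disjoint (interior s) (interior sᶜ) :=
    disjoint_compl_right.mono interior_subset interior_subset
  rcases ht.subset_or_subset isOpen_interior isOpen_interior hdisj hcover with hs | hs
  · obtain ⟨x, hxt, hxs⟩ := hts'
    exact hxs (interior_subset (hs hxt))
  · obtain ⟨x, hxt, hxs⟩ := hts
    exact interior_subset (hs hxt) hxs

theorem lipschitzWith_indicator_of_eqOn_frontier {E F : Type*} [NormedAddCommGroup E]
    [NormedSpace ℝ E] [NormedAddCommGroup F] {s : Set E} {f : E → F} {c : ℝ≥0}
    (hs : IsClosed s) (hf : LipschitzOnWith c f s) (hf₀ : EqOn f 0 (frontier s)) :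
    LipschitzWith c (s.indicator f) := by
  have hmixed {x y : E} (hx : x ∈ s) (hy : y ∉ s) : dist (f x) 0 ≤ c * dist x y := by
    obtain ⟨z, hz, hzs⟩ := inter_frontier_nonempty_of_isPreconnected
      (convex_segment x y).isPreconnected
      ⟨x, left_mem_segment ℝ x y, hx⟩ ⟨y, right_mem_segment ℝ x y, hy⟩
    calc dist (f x) 0 = dist (f x) (f z) := by rw [hf₀ hzs, Pi.zero_apply]
      _ ≤ c * dist x z := hf.dist_le_mul x hx z (hs.frontier_subset hzs)
      _ ≤ c * dist x y := by
        gcongr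
        linarith [dist_add_dist_of_mem_segment hz, dist_nonneg (x := z) (y := y)]
  refine LipschitzWith.of_dist_le_mul fun x y => ?_
  by_cases hx : x ∈ s <;> by_cases hy : y ∈ s
  · simpa only [indicator_of_mem, hx, hy] using hf.dist_le_mul x hx y hy
  · simpa only [indicator_of_mem, indicator_of_notMem, hx, hy, not_false_iff] using hmixed hx hy
  · simpa only [indicator_of_mem, indicator_of_notMem, hx, hy, not_false_iff, dist_comm]
      using hmixed hy hx
  · simp only [indicator_of_notMem, hx, hy, not_false_iff, dist_self]
    positivity

theorem bijOn_of_bijective_of_eqOn_compl {α : Type*} {s : Set α} {f : α → α}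
    (hf : Bijective f) (hfs : EqOn f id sᶜ) : BijOn f s s := by
  have hcompl : f '' sᶜ = sᶜ := by rw [hfs.image_eq, image_id]
  rw [image_compl_eq hf, compl_inj_iff] at hcompl
  exact ⟨mapsTo_iff_image_subset.2 hcompl.subset, hf.injective.injOn, hcompl.superset⟩

theorem bijOn_id_add_of_eqOn_frontier {E : Type*} [NormedAddCommGroup E]
    [NormedSpace ℝ E] [CompleteSpace E] {s : Set E} {f : E → E} {c : ℝ≥0}
    (hs : IsClosed s) (hf : LipschitzOnWith c f s) (hc : c < 1) (hf₀ : EqOn f 0 (frontier s)) :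
    BijOn (fun x => x + f x) s s := by
  obtain ⟨e, he⟩ := exists_homeomorph_id_add
    (lipschitzWith_indicator_of_eqOn_frontier hs hf hf₀) hc
  have heq : EqOn e id sᶜ := fun x hx => by simp [he, indicator_of_notMem hx]
  exact (bijOn_of_bijective_of_eqOn_compl e.bijective heq).congr fun x hx => by
    simp [he, indicator_of_mem hx]

end LipschitzPerturbation

section Volume

variable {E : Type*} [NormedAddCommGroup E] [NormedSpace ℝ E] [FiniteDimensional ℝ E]

theorem det_one_add_pos_of_norm_lt_one {T : E →L[ℝ] E} (hT : ‖T‖ < 1) : 0 < (1 + T).det := by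
  have : CompleteSpace E := FiniteDimensional.complete ℝ E
  have det_ne_zero (t : ℝ) (ht : t ∈ Icc (0 : ℝ) 1) : (1 + t • T).det ≠ 0 := by
    have hnorm : ‖-(t • T)‖ < 1 := by
      rw [norm_neg, norm_smul, Real.norm_of_nonneg ht.1]
      exact (mul_le_of_le_one_left (norm_nonneg _) ht.2).trans_lt hT
    have hunit : IsUnit (1 + t • T) := by simpa using isUnit_one_sub_of_norm_lt_one hnorm
    exact ((hunit.map ContinuousLinearMap.toLinearMapRingHom).map LinearMap.det).ne_zero
  have hcont : Continuous fun t : ℝ => (1 + t • T).det :=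
    ContinuousLinearMap.continuous_det.comp (by fun_prop)
  by_contra! hneg
  obtain ⟨t, ht, ht₀⟩ := intermediate_value_Icc' zero_le_one hcont.continuousOn
    (show (0 : ℝ) ∈ Icc _ _ by simpa [ContinuousLinearMap.det] using hneg)
  exact det_ne_zero t ht ht₀

theorem exists_polynomial_eval_eq_setIntegral_det {Ω : Type*} [TopologicalSpace Ω]
    [T2Space Ω] [MeasurableSpace Ω] [OpensMeasurableSpace Ω] {μ : Measure Ω}
    [IsFiniteMeasureOnCompacts μ] {K : Set Ω} {T : Ω → E →L[ℝ] E} (hK : IsCompact K)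
    (hT : ContinuousOn T K) :
    ∃ p : ℝ[X], ∀ t, p.eval t = ∫ x in K, (1 + t • T x).det ∂μ := by
  choose p hpdeg hp using fun x =>
    exists_polynomial_eval_eq_det_one_add_smul (T x : E →ₗ[ℝ] E)
  have hp' (x : Ω) (t : ℝ) : (p x).eval t = (1 + t • T x).det := hp x t
  have hint (t : ℝ) : IntegrableOn (fun x => (p x).eval t) K μ := by
    simp only [hp']
    have hcont : ContinuousOn (fun x => (1 + t • T x).det) K :=
      ContinuousLinearMap.continuous_det.comp_continuousOn (by fun_prop)
    exact hcont.integrableOn_compact hK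
  simpa only [hp'] using exists_polynomial_eval_eq_integral hpdeg hint

section Integral

variable [MeasurableSpace E] [BorelSpace E] (μ : Measure E) [μ.IsAddHaarMeasure]
  {K : Set E} {f : E → E} {f' : E → E →L[ℝ] E}

theorem setIntegral_det_one_add_of_nnnorm_le {c : ℝ≥0} (hK : IsClosed K) (hKconv : Convex ℝ K)
    (hf₀ : EqOn f 0 (frontier K)) (hf' : ∀ x ∈ K, HasFDerivWithinAt f (f' x) K x)
    (hbound : ∀ x ∈ K, ‖f' x‖₊ ≤ c) (hc : c < 1) :
    ∫ x in K, (1 + f' x).det ∂μ = μ.real K := by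
  have : CompleteSpace E := FiniteDimensional.complete ℝ E
  have hlip : LipschitzOnWith c f K :=
    hKconv.lipschitzOnWith_of_nnnorm_hasFDerivWithin_le hf' hbound
  have hbij : BijOn (fun x => x + f x) K K := bijOn_id_add_of_eqOn_frontier hK hlip hc hf₀
  have hderiv (x) (hx : x ∈ K) : HasFDerivWithinAt (fun x => x + f x) (1 + f' x) K x :=
    (hasFDerivWithinAt_id x K).add (hf' x hx)
  have hdet (x) (hx : x ∈ K) : 0 < (1 + f' x).det :=
    det_one_add_pos_of_norm_lt_one ((NNReal.coe_le_coe.2 (hbound x hx)).trans_lt hc)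
  calc ∫ x in K, (1 + f' x).det ∂μ = ∫ x in K, |(1 + f' x).det| • (1 : ℝ) ∂μ :=
        setIntegral_congr_fun hK.measurableSet fun x hx => by
          rw [smul_eq_mul, mul_one, abs_of_pos (hdet x hx)]
    _ = ∫ _ in (fun x => x + f x) '' K, (1 : ℝ) ∂μ :=
        (integral_image_eq_integral_abs_det_fderiv_smul μ hK.measurableSet hderiv hbij.injOn
          fun _ => (1 : ℝ)).symm
    _ = μ.real K := by rw [hbij.image_eq, setIntegral_one_eq_measureReal]

theorem setIntegral_det_one_add_eq_measureReal (hK : IsCompact K) (hKconv : Convex ℝ K)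
    (hf₀ : EqOn f 0 (frontier K)) (hf' : ∀ x ∈ K, HasFDerivWithinAt f (f' x) K x)
    (hf'cont : ContinuousOn f' K) :
    ∫ x in K, (1 + f' x).det ∂μ = μ.real K := by
  obtain ⟨p, hp⟩ := exists_polynomial_eval_eq_setIntegral_det (μ := μ) hK hf'cont
  obtain ⟨C, hC₀, hC⟩ := (hK.image_of_continuousOn hf'cont).isBounded.exists_pos_norm_le
  have eval_eq (t : ℝ) (ht : t ∈ Ioo 0 (1 / C)) : p.eval t = μ.real K := by
    lift C to ℝ≥0 using hC₀.le
    lift t to ℝ≥0 using ht.1.le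
    rw [hp]
    refine setIntegral_det_one_add_of_nnnorm_le (f := (t : ℝ) • f) (c := t * C) μ hK.isClosed hKconv
      (fun x hx => by simp [hf₀ hx]) (fun x hx => (hf' x hx).const_smul (t : ℝ)) (fun x hx => ?_) ?_
    · rw [nnnorm_smul, NNReal.nnnorm_eq]
      gcongr
      exact hC _ (mem_image_of_mem f' hx)
    · exact_mod_cast (lt_div_iff₀ hC₀).1 ht.2
  have hpconst : p = Polynomial.C (μ.real K) :=
    Polynomial.eq_of_infinite_eval_eq _ _ <| (Ioo_infinite (one_div_pos.2 hC₀)).mono fun t ht => by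
      simpa using eval_eq t ht
  simpa [hpconst] using (hp 1).symm

end Integral

theorem det_eq_zero_of_mapsTo_frontier {s t : Set E} {r : E → E} {r' : E →L[ℝ] E} {x : E}
    (hs : s ∈ 𝓝 x) (ht : IsClosed t) (hmaps : MapsTo r s (frontier t))
    (hr : HasStrictFDerivAt r r' x) : r'.det = 0 := by
  have : CompleteSpace E := FiniteDimensional.complete ℝ E
  by_contra hdet
  have himage : frontier t ∈ 𝓝 (r x) := by
    rw [← HasStrictFDerivAt.map_nhds_eq_of_equiv
      (f' := r'.toContinuousLinearEquivOfDetNeZero hdet) hr, mem_map]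
    exact mem_of_superset hs hmaps
  simpa [interior_frontier ht] using mem_interior_iff_mem_nhds.2 himage

theorem not_eqOn_frontier_of_contDiffOn {K : Set E} {r : E → E} (hK : IsCompact K)
    (hKconv : Convex ℝ K) (hKint : (interior K).Nonempty) (hr : ContDiffOn ℝ 1 r K)
    (hmaps : MapsTo r K (frontier K)) : ¬ EqOn r id (frontier K) := by
  intro hid
  borelize E
  let μ : Measure E := Measure.addHaar
  have hdiff : UniqueDiffOn ℝ K := uniqueDiffOn_convex hKconv hKint
  have hzero (x) (hx : x ∈ interior K) : (fderivWithin ℝ r K x).det = 0 := by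
    have hKx : K ∈ 𝓝 x := mem_interior_iff_mem_nhds.1 hx
    have hstrict := (hr.contDiffAt hKx).hasStrictFDerivAt one_ne_zero
    rw [fderivWithin_of_mem_nhds hKx]
    exact det_eq_zero_of_mapsTo_frontier hKx hK.isClosed hmaps hstrict
  have hvolume : ∫ x in K, (fderivWithin ℝ r K x).det ∂μ = μ.real K := by
    have h := setIntegral_det_one_add_eq_measureReal (f := fun x => r x - x)
      (f' := fun x => fderivWithin ℝ r K x - 1) μ hK hKconv
      (fun x hx => by simp [hid hx])
      (fun x hx => ((hr.differentiableOn one_ne_zero x hx).hasFDerivWithinAt).sub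
        (hasFDerivWithinAt_id x K))
      ((hr.continuousOn_fderivWithin hdiff le_rfl).sub continuousOn_const)
    simpa only [add_sub_cancel] using h
  have hpos : 0 < μ.real K := by
    rw [measureReal_def]
    exact ENNReal.toReal_pos (Measure.measure_pos_of_nonempty_interior μ hKint).ne'
      hK.measure_lt_top.ne
  have hnull : ∫ x in K, (fderivWithin ℝ r K x).det ∂μ = 0 := by
    rw [← setIntegral_congr_set (interior_ae_eq_of_null_frontier (hKconv.addHaar_frontier μ))]
    exact setIntegral_eq_zero_of_forall_eq_zero hzero
  exact hpos.ne (hnull.symm.trans hvolume)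

end Volume

section RayExit

variable {E : Type*} [NormedAddCommGroup E] [InnerProductSpace ℝ E]

/-- A quarter of the discriminant of the equation `‖x + t • u‖ ^ 2 = R ^ 2`, quadratic in `t`, whose
roots locate the intersections of the line through `x` in direction `u` with a sphere. -/
noncomputable def rayDiscrim (R : ℝ) (x u : E) : ℝ :=
  ⟪x, u⟫ ^ 2 + ‖u‖ ^ 2 * (R ^ 2 - ‖x‖ ^ 2)

/-- The point where the ray from `x` in the direction `u` leaves the ball of radius `R` around the
origin, given by the larger root of `‖x + t • u‖ ^ 2 = R ^ 2`; with `u = x - g x` it retracts the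
ball onto its sphere. It is a junk value if `u = 0` or `rayDiscrim R x u < 0`. -/
noncomputable def rayExit (R : ℝ) (x u : E) : E :=
  x + ((√(rayDiscrim R x u) - ⟪x, u⟫) / ‖u‖ ^ 2) • u

theorem inner_self_sub_pos {x y : E} (hyx : ‖y‖ ≤ ‖x‖) (hne : y ≠ x) : 0 < ⟪x, x - y⟫ := by
  have hsub : 0 < ‖x - y‖ ^ 2 := by
    have := norm_sub_pos_iff.2 hne.symm
    positivity
  have hsq : ‖y‖ ^ 2 ≤ ‖x‖ ^ 2 := by gcongr
  rw [norm_sub_sq_real] at hsub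
  rw [inner_sub_right, real_inner_self_eq_norm_sq]
  linarith

theorem rayDiscrim_sub_pos {R : ℝ} {x y : E} (hx : ‖x‖ ≤ R) (hy : ‖y‖ ≤ R) (hne : y ≠ x) :
    0 < rayDiscrim R x (x - y) := by
  rcases hx.lt_or_eq with hlt | rfl
  · have hsub := norm_sub_pos_iff.2 hne.symm
    have hsq : 0 < R ^ 2 - ‖x‖ ^ 2 := sub_pos.2 (by gcongr)
    unfold rayDiscrim
    positivity
  · have := inner_self_sub_pos hy hne
    unfold rayDiscrim
    rw [sub_self, mul_zero, add_zero]
    positivity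

theorem norm_rayExit {R : ℝ} {x u : E} (hR : 0 ≤ R) (hu : u ≠ 0) (hdisc : 0 ≤ rayDiscrim R x u) :
    ‖rayExit R x u‖ = R := by
  have hu' : ‖u‖ ≠ 0 := norm_ne_zero_iff.2 hu
  have hsq := Real.sq_sqrt hdisc
  rw [← sq_eq_sq₀ (norm_nonneg _) hR, rayExit, norm_add_sq_real, real_inner_smul_right, norm_smul,
    mul_pow, Real.norm_eq_abs, sq_abs]
  field_simp
  rw [rayDiscrim] at hsq ⊢
  linear_combination hsq

theorem rayExit_of_norm_eq {R : ℝ} {x u : E} (hx : ‖x‖ = R) (hxu : 0 ≤ ⟪x, u⟫) :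
    rayExit R x u = x := by
  simp [rayExit, rayDiscrim, hx, Real.sqrt_sq hxu]

theorem contDiffOn_rayExit {F : Type*} [NormedAddCommGroup F] [NormedSpace ℝ F] {n : WithTop ℕ∞}
    {R : ℝ} {s : Set F} {x u : F → E} (hx : ContDiffOn ℝ n x s) (hu : ContDiffOn ℝ n u s)
    (hu₀ : ∀ z ∈ s, u z ≠ 0) (hdisc : ∀ z ∈ s, rayDiscrim R (x z) (u z) ≠ 0) :
    ContDiffOn ℝ n (fun z => rayExit R (x z) (u z)) s := by
  have hdisc_smooth : ContDiffOn ℝ n (fun z => rayDiscrim R (x z) (u z)) s :=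
    ((hx.inner ℝ hu).pow 2).add ((hu.norm_sq ℝ).mul (contDiffOn_const.sub (hx.norm_sq ℝ)))
  exact hx.add ((((hdisc_smooth.sqrt hdisc).sub (hx.inner ℝ hu)).div (hu.norm_sq ℝ)
    fun z hz => by simpa using hu₀ z hz).smul hu)

end RayExit

section Brouwer

variable {E : Type*} [NormedAddCommGroup E]

theorem exists_mem_closedBall_isFixedPt_of_contDiffOn [InnerProductSpace ℝ E]
    [FiniteDimensional ℝ E] {R : ℝ} (hR : 0 < R) {g : E → E}
    (hg : ContDiffOn ℝ 1 g (closedBall 0 R)) (hmaps : MapsTo g (closedBall 0 R) (closedBall 0 R)) :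
    ∃ x ∈ closedBall 0 R, IsFixedPt g x := by
  by_contra! hfix
  have hdisc (x) (hx : x ∈ closedBall 0 R) : 0 < rayDiscrim R x (x - g x) :=
    rayDiscrim_sub_pos (mem_closedBall_zero_iff.1 hx) (mem_closedBall_zero_iff.1 (hmaps hx))
      (hfix x hx)
  have hsub (x) (hx : x ∈ closedBall 0 R) : x - g x ≠ 0 := sub_ne_zero.2 (Ne.symm (hfix x hx))
  refine not_eqOn_frontier_of_contDiffOn (r := fun x => rayExit R x (x - g x))
    (isCompact_closedBall 0 R) (convex_closedBall 0 R) ?_ ?_ ?_ ?_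
  · rw [interior_closedBall _ hR.ne']
    exact nonempty_ball.2 hR
  · exact contDiffOn_rayExit contDiffOn_id (contDiffOn_id.sub hg) hsub
      fun x hx => (hdisc x hx).ne'
  · intro x hx
    rw [frontier_closedBall _ hR.ne', mem_sphere_zero_iff_norm]
    exact norm_rayExit hR.le (hsub x hx) (hdisc x hx).le
  · intro x hx
    rw [frontier_closedBall _ hR.ne', mem_sphere_zero_iff_norm] at hx
    have hxR : x ∈ closedBall 0 R := mem_closedBall_zero_iff.2 hx.le
    have hgx : ‖g x‖ ≤ ‖x‖ := by simpa [hx] using hmaps hxR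
    exact rayExit_of_norm_eq hx (inner_self_sub_pos hgx (hfix x hxR)).le

theorem exists_contDiff_forall_mem_forall_not_isFixedPt [NormedSpace ℝ E] [FiniteDimensional ℝ E]
    {C : Set E} (hC : Convex ℝ C) {f : E → E} (hf : Continuous f) (hmem : ∀ x, f x ∈ C)
    (hfix : ∀ x, ¬ IsFixedPt f x) :
    ∃ g : E → E, ContDiff ℝ 1 g ∧ (∀ x, g x ∈ C) ∧ ∀ x, ¬ IsFixedPt g x := by
  have hlocal (x : E) : ∃ c, ∀ᶠ y in 𝓝 x, c ∈ ball (f y) (dist y (f y)) ∩ C := by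
    have hx : 0 < dist x (f x) := dist_pos.2 (Ne.symm (hfix x))
    refine ⟨f x, ?_⟩
    have hlt : ∀ᶠ y in 𝓝 x, dist (f x) (f y) < dist y (f y) :=
      ContinuousAt.eventually_lt (by fun_prop) (by fun_prop) (by simpa using hx)
    exact hlt.mono fun y hy => ⟨hy, hmem x⟩
  obtain ⟨g, hg⟩ := exists_contMDiffMap_forall_mem_convex_of_local_const (modelWithCornersSelf ℝ E)
    (n := 1) (fun x => (convex_ball (f x) (dist x (f x))).inter hC) hlocal
  refine ⟨g, contMDiff_iff_contDiff.1 g.contMDiff, fun x => (hg x).2, fun x hx => ?_⟩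
  have hlt : dist (g x) (f x) < dist x (f x) := (hg x).1
  rw [hx.eq] at hlt
  exact hlt.false

theorem exists_isFixedPt_of_forall_mem_closedBall [InnerProductSpace ℝ E] [FiniteDimensional ℝ E]
    {R : ℝ} (hR : 0 < R) {f : E → E} (hf : Continuous f) (hmem : ∀ x, f x ∈ closedBall 0 R) :
    ∃ x, IsFixedPt f x := by
  by_contra! hfix
  obtain ⟨g, hg, hgmem, hgfix⟩ :=
    exists_contDiff_forall_mem_forall_not_isFixedPt (convex_closedBall 0 R) hf hmem hfix
  obtain ⟨x, -, hx⟩ := exists_mem_closedBall_isFixedPt_of_contDiffOn hR hg.contDiffOn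
    fun x _ => hgmem x
  exact hgfix x hx

theorem exists_continuous_eqOn_id_of_isComplete_convex [InnerProductSpace ℝ E] {K : Set E}
    (hne : K.Nonempty) (hK : IsComplete K) (hconv : Convex ℝ K) :
    ∃ P : E → E, Continuous P ∧ (∀ x, P x ∈ K) ∧ EqOn P id K := by
  choose P hPmem hP using fun x => exists_norm_eq_iInf_of_complete_convex hne hK hconv x
  have hvar (x) : ∀ w ∈ K, ⟪x - P x, w - P x⟫ ≤ 0 :=
    (norm_eq_iInf_iff_real_inner_le_zero hconv (hPmem x)).1 (hP x)
  have hlip : LipschitzWith 1 P := by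
    refine LipschitzWith.of_dist_le_mul fun x y => ?_
    rw [NNReal.coe_one, one_mul, dist_eq_norm, dist_eq_norm]
    have hsq : ‖P x - P y‖ ^ 2 ≤ ⟪x - y, P x - P y⟫ := by
      have h₁ := hvar x (P y) (hPmem y)
      have h₂ := hvar y (P x) (hPmem x)
      rw [← real_inner_self_eq_norm_sq]
      simp only [inner_sub_left, inner_sub_right] at h₁ h₂ ⊢
      linarith
    have := hsq.trans (real_inner_le_norm _ _)
    by_contra! hlt
    nlinarith [norm_nonneg (x - y)]
  refine ⟨P, hlip.continuous, hPmem, fun x hx => ?_⟩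
  have := hvar x x hx
  rw [real_inner_self_nonpos, sub_eq_zero] at this
  exact this.symm

end Brouwer

theorem exists_isFixedPt_of_isCompact_of_convex {E : Type*} [AddCommGroup E] [TopologicalSpace E]
    [IsTopologicalAddGroup E] [T2Space E] [Module ℝ E] [ContinuousSMul ℝ E] [FiniteDimensional ℝ E]
    {K : Set E} (hne : K.Nonempty) (hK : IsCompact K) (hconv : Convex ℝ K) {f : K → K}
    (hf : Continuous f) : ∃ x, IsFixedPt f x := by
  let e : E ≃L[ℝ] EuclideanSpace ℝ (Fin (finrank ℝ E)) := toEuclidean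
  have heK : IsCompact (e '' K) := hK.image e.continuous
  obtain ⟨P, hP, hPmem, hPid⟩ := exists_continuous_eqOn_id_of_isComplete_convex
    (hne.image e) heK.isComplete (hconv.linear_image e.toLinearMap)
  have hmem (z) : e.symm (P z) ∈ K := by
    obtain ⟨x, hx, hxz⟩ := hPmem z
    rwa [← hxz, e.symm_apply_apply]
  obtain ⟨R, hR, hbound⟩ := heK.isBounded.exists_pos_norm_le
  obtain ⟨z, hz⟩ := exists_isFixedPt_of_forall_mem_closedBall hR
    (f := fun z => e (f ⟨e.symm (P z), hmem z⟩)) (by fun_prop)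
    fun z => mem_closedBall_zero_iff.2 (hbound _ (mem_image_of_mem e (Subtype.coe_prop _)))
  have hzK : z ∈ e '' K := hz.eq ▸ mem_image_of_mem e (Subtype.coe_prop _)
  refine ⟨⟨e.symm (P z), hmem z⟩, Subtype.ext ?_⟩
  rw [e.eq_symm_apply]
  exact hz.trans (hPid hzK).symm

section Schauder

variable {S : Type*} [NormedAddCommGroup S] [NormedSpace ℝ S]

theorem exists_stdSimplex_dist_sum_smul_lt {ι : Type*} [Fintype ι] [Nonempty ι] {v : ι → S}
    {T : stdSimplex ℝ ι → S} (hT : Continuous T) {ε : ℝ} (hv : ∀ w, ∃ i, dist (v i) (T w) < ε) :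
    ∃ w : stdSimplex ℝ ι, dist (∑ i, w i • v i) (T w) < ε := by
  classical
  let near (w : stdSimplex ℝ ι) : Set (ι → ℝ) :=
    stdSimplex ℝ ι ∩ Fintype.linearCombination ℝ v ⁻¹' ball (T w) ε
  have near_convex (w) : Convex ℝ (near w) :=
    (convex_stdSimplex ℝ ι).inter ((convex_ball _ _).linear_preimage _)
  have near_local (w) : ∃ c, ∀ᶠ w' in 𝓝 w, c ∈ near w' := by
    obtain ⟨i, hi⟩ := hv w
    refine ⟨Pi.single i 1, ?_⟩
    have hlt : ∀ᶠ w' in 𝓝 w, dist (v i) (T w') < ε :=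
      ContinuousAt.eventually_lt (by fun_prop) continuousAt_const hi
    exact hlt.mono fun w' hw' => ⟨single_mem_stdSimplex ℝ i, by simpa using hw'⟩
  obtain ⟨g, hg⟩ := exists_continuous_forall_mem_convex_of_local_const near_convex near_local
  obtain ⟨w, hw⟩ := exists_isFixedPt_of_isCompact_of_convex
    (nonempty_coe_sort.1 inferInstance) (isCompact_stdSimplex ℝ ι) (convex_stdSimplex ℝ ι)
    (f := fun w => ⟨g w, (hg w).1⟩) (by fun_prop)
  refine ⟨w, ?_⟩
  have hgw : g w = w := congrArg Subtype.val hw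
  simpa [Fintype.linearCombination_apply, hgw] using (hg w).2

theorem exists_dist_lt_of_totallyBounded_image {M : Set S} (hne : M.Nonempty) (hconv : Convex ℝ M)
    {T : S → S} (hT : ContinuousOn T M) (hmaps : MapsTo T M M) (htb : TotallyBounded (T '' M))
    {ε : ℝ} (hε : 0 < ε) : ∃ x ∈ M, dist x (T x) < ε := by
  obtain ⟨F, hFsub, hFfin, hFcover⟩ := finite_approx_of_totallyBounded htb ε hε
  have : Fintype F := hFfin.fintype
  have hnet (x) (hx : x ∈ M) : ∃ v : F, dist (v : S) (T x) < ε := by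
    obtain ⟨v, hv, hlt⟩ := mem_iUnion₂.1 (hFcover (mem_image_of_mem T hx))
    exact ⟨⟨v, hv⟩, mem_ball'.1 hlt⟩
  obtain ⟨x₀, hx₀⟩ := hne
  have : Nonempty F := (hnet x₀ hx₀).nonempty
  have hsum (w : stdSimplex ℝ F) : ∑ v, w v • (v : S) ∈ M :=
    hconv.sum_mem (fun v _ => w.2.1 v) w.2.2 fun v _ => hmaps.image_subset (hFsub v.2)
  have hcont : Continuous fun w : stdSimplex ℝ F => ∑ v, w v • (v : S) :=
    continuous_finsetSum _ fun v _ =>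
      ((continuous_apply v).comp continuous_subtype_val).smul continuous_const
  obtain ⟨w, hw⟩ := exists_stdSimplex_dist_sum_smul_lt (v := ((↑) : F → S))
    (T := fun w => T (∑ v, w v • (v : S)))
    (hT.comp_continuous hcont hsum) fun w => hnet _ (hsum w)
  exact ⟨_, hsum w, hw⟩

theorem exists_mem_isFixedPt_of_forall_dist_lt {X : Type*} [MetricSpace X] {M K : Set X} {T : X → X}
    (hM : IsClosed M) (hT : ContinuousOn T M) (hK : IsCompact K) (hmaps : MapsTo T M K)
    (happrox : ∀ ε > 0, ∃ x ∈ M, dist x (T x) < ε) : ∃ x ∈ M, IsFixedPt T x := by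
  choose! x hxM hx using fun n : ℕ => happrox (1 / (n + 1)) Nat.one_div_pos_of_nat
  obtain ⟨z, -, ψ, hψ, hTz⟩ := hK.tendsto_subseq fun n => hmaps (hxM n)
  have hdist : Tendsto (fun n => dist (T (x n)) (x n)) atTop (𝓝 0) :=
    squeeze_zero (fun _ => dist_nonneg) (fun n => (dist_comm _ _).trans_le (hx n).le)
      tendsto_one_div_add_atTop_nhds_zero_nat
  have hxz : Tendsto (x ∘ ψ) atTop (𝓝 z) :=
    hTz.congr_dist (hdist.comp hψ.tendsto_atTop)
  have hzM : z ∈ M := hM.mem_of_tendsto hxz (Eventually.of_forall fun n => hxM (ψ n))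
  have hTz' : Tendsto (T ∘ x ∘ ψ) atTop (𝓝 (T z)) :=
    (hT z hzM).tendsto.comp
      (tendsto_nhdsWithin_iff.2 ⟨hxz, Eventually.of_forall fun n => hxM (ψ n)⟩)
  exact ⟨z, hzM, tendsto_nhds_unique hTz' hTz⟩

theorem exists_mem_isFixedPt_of_mapsTo_isCompact {M K : Set S} (hne : M.Nonempty)
    (hclosed : IsClosed M) (hconv : Convex ℝ M) {T : S → S} (hT : ContinuousOn T M)
    (hTM : MapsTo T M M) (hK : IsCompact K) (hTK : MapsTo T M K) : ∃ x ∈ M, IsFixedPt T x :=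
  exists_mem_isFixedPt_of_forall_dist_lt hclosed hT hK hTK fun _ =>
    exists_dist_lt_of_totallyBounded_image hne hconv hT hTM
      (hK.totallyBounded.subset hTK.image_subset)

end Schauder

/-- Burton's variant of Krasnosel'skii's fixed point theorem (Theorem 1.4): if
`M` is a nonempty closed convex subset of a Banach space `S`, `B` is a
contraction on `S` with constant `α < 1`, `A` is continuous on `M` with
`A(M)` contained in a compact set, and `x = B x + A y` with `y ∈ M` implies
`x ∈ M`, then there is `y ∈ M` with `A y + B y = y`. -/
theorem burton_fixed_point
    (S : Type*) [NormedAddCommGroup S] [NormedSpace ℝ S] [CompleteSpace S]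
    (M : Set S) (hne : M.Nonempty) (hclosed : IsClosed M) (hconv : Convex ℝ M)
    (A B : S → S)
    (α : ℝ) (hα : α < 1)
    (hB : ∀ x y : S, ‖B x - B y‖ ≤ α * ‖x - y‖)
    (hAcont : ContinuousOn A M)
    (hAcomp : ∃ K : Set S, IsCompact K ∧ A '' M ⊆ K)
    (himp : ∀ x : S, ∀ y ∈ M, x = B x + A y → x ∈ M) :
    ∃ y ∈ M, A y + B y = y := by
  obtain ⟨K, hK, hAK⟩ := hAcomp
  have hlip : LipschitzWith α.toNNReal (-B) := LipschitzWith.of_dist_le_mul fun x y => by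
    rw [Pi.neg_apply, Pi.neg_apply, dist_neg_neg, dist_eq_norm, dist_eq_norm]
    exact (hB x y).trans (by gcongr; exact Real.le_coe_toNNReal α)
  obtain ⟨e, he⟩ := exists_homeomorph_id_add hlip (Real.toNNReal_lt_one.2 hα)
  have solves (z : S) : e.symm z = B (e.symm z) + z := by
    have h := he (e.symm z)
    rw [e.apply_symm_apply, Pi.neg_apply, ← sub_eq_add_neg] at h
    exact sub_eq_iff_eq_add'.1 h.symm
  obtain ⟨y, hy, hfix⟩ := exists_mem_isFixedPt_of_mapsTo_isCompact (T := e.symm ∘ A) hne hclosed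
    hconv (e.symm.continuous.comp_continuousOn hAcont) (fun y hy => himp _ y hy (solves (A y)))
    (hK.image e.symm.continuous) (fun y hy => mem_image_of_mem _ (hAK (mem_image_of_mem A hy)))
  refine ⟨y, hy, ?_⟩
  have hy' := solves (A y)
  rwa [show e.symm (A y) = y from hfix, add_comm, eq_comm] at hy'
end
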